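/- arXiv:2112.10679 — 5 statements merged into one kernel-verified Lean document; each statement's English description precedes it below -/
import Mathlib

section
/- For every integer m ≥ 2, the kernel of the ℂ-algebra homomorphism φ : ℂ[X_0, …, X_{m−1}] → ℂ[T] (from MvPolynomial (Fin m) ℂ to Polynomial ℂ) determined by φ(X_i) = T^{m+i} for i = 0, …, m−1 equals the ideal generated by the 2×2 minors of the 2×m matrix whose first row is (X_0, X_1, …, X_{m−1}) and whose second row is (X_1, X_2, …, X_{m−1}, X_0²); explicitly, it is the ideal generated by the polynomials X_i·σ(j) − X_j·σ(i) for 0 ≤ i < j ≤ m−1, where σ(k) = X_{k+1} for k < m−1 and σ(m−1) = X_0². -/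
/-!
Extend `X₀, …, X_{m-1}` to a sequence indexed by `ℕ` by `X_{k+m} = X₀ X_k`. The second row of the
matrix is then simply `X_{k+1}`, and multiplying the minors by powers of `X₀` shows that
`X_i X_{j+1} ≡ X_j X_{i+1}` modulo the minors for all `i, j : ℕ`. Moving the indices one unit at a
time gives `X_i X_j ≡ X₀ X_{i+j} = X_{i+j+m}`. Hence every polynomial is congruent to a linear
combination of `1` and the `X_k`, whose images `1` and `T^{m+k}` are linearly independent.
-/

namespace MonomialCurve

variable {m : ℕ} [NeZero m]

section Monoid

variable {M N : Type*}

/-- The extension of `x₀, …, x_{m-1}` to a sequence on `ℕ` with `x_{k+m} = x₀ x_k`. On the monomial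
curve, where `x_i = t^{m+i}`, its `k`-th term is `t^{m+k}`. -/
def extend [Monoid M] (x : Fin m → M) (k : ℕ) : M :=
  x 0 ^ (k / m) * x (Fin.ofNat m k)

/-- The vanishing at `x` of the `2 × 2` minors of the matrix with rows `x₀, …, x_{m-1}` and
`x₁, …, x_{m-1}, x₀²`, written without subtraction. -/
def MinorsVanish [Monoid M] (x : Fin m → M) : Prop :=
  ∀ i j : Fin m, i < j → x i * extend x (j + 1) = x j * extend x (i + 1)

theorem extend_coe [Monoid M] (x : Fin m → M) (i : Fin m) : extend x i = x i := by
  simp [extend, Nat.div_eq_of_lt i.isLt]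

theorem extend_add_mul_self [Monoid M] (x : Fin m → M) (k n : ℕ) :
    extend x (k + n * m) = x 0 ^ n * extend x k := by
  have index_eq : Fin.ofNat m (k + n * m) = Fin.ofNat m k := by
    ext
    simp
  rw [extend, extend, index_eq, Nat.add_mul_div_right _ _ (NeZero.pos m), add_comm, pow_add,
    mul_assoc]

theorem extend_coe_succ [Monoid M] (x : Fin m → M) (k : Fin m) :
    extend x (k + 1) = if h : (k : ℕ) + 1 < m then x ⟨k + 1, h⟩ else x 0 ^ 2 := by
  split_ifs with h
  · exact extend_coe x ⟨k + 1, h⟩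
  · have hk : (k : ℕ) + 1 = (0 : Fin m) + 1 * m := by
      rw [Fin.val_zero]
      omega
    rw [hk, extend_add_mul_self, extend_coe, pow_one, sq]

theorem map_extend [Monoid M] [Monoid N] {F : Type*} [FunLike F M N] [MonoidHomClass F M N]
    (f : F) (x : Fin m → M) (k : ℕ) : f (extend x k) = extend (fun i => f (x i)) k := by
  simp only [extend, map_mul, map_pow]

theorem extend_pow_add [Monoid M] (t : M) (k : ℕ) :
    extend (fun i : Fin m => t ^ (m + (i : ℕ))) k = t ^ (m + k) := by
  rw [extend, Fin.val_zero, Fin.val_ofNat, ← pow_mul, ← pow_add]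
  congr 1
  linarith [Nat.div_add_mod k m]

theorem minorsVanish_pow_add [Monoid M] (t : M) :
    MinorsVanish (fun i : Fin m => t ^ (m + (i : ℕ))) := by
  intro i j _
  rw [extend_pow_add, extend_pow_add, ← pow_add, ← pow_add]
  congr 1
  ring

variable [CommMonoid M] {x : Fin m → M}

theorem MinorsVanish.extend_mul_extend_succ (hx : MinorsVanish x) (i j : ℕ) :
    extend x i * extend x (j + 1) = extend x j * extend x (i + 1) := by
  have minor (i j : Fin m) : x i * extend x (j + 1) = x j * extend x (i + 1) := by
    rcases lt_trichotomy i j with h | rfl | h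
    · exact hx i j h
    · rfl
    · exact (hx j i h).symm
  have succ_eq (k : ℕ) :
      extend x (k + 1) = x 0 ^ (k / m) * extend x (Fin.ofNat m k + 1) := by
    rw [← extend_add_mul_self, Fin.val_ofNat, add_right_comm, Nat.mod_add_div']
  have extend_eq (k : ℕ) : extend x k = x 0 ^ (k / m) * x (Fin.ofNat m k) := rfl
  rw [succ_eq i, succ_eq j, extend_eq i, extend_eq j, mul_mul_mul_comm, minor,
    mul_comm (x 0 ^ (i / m)), mul_mul_mul_comm]

theorem MinorsVanish.extend_mul_extend (hx : MinorsVanish x) (i j : ℕ) :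
    extend x i * extend x j = extend x (i + j + m) := by
  induction i generalizing j with
  | zero =>
    have extend_zero : extend x 0 = x 0 := extend_coe x 0
    simpa [extend_zero] using (extend_add_mul_self x j 1).symm
  | succ i ih =>
    rw [mul_comm, ← hx.extend_mul_extend_succ, ih, add_right_comm i 1 j, add_assoc i j 1]

end Monoid

section Algebra

variable {R : Type*}

theorem map_linearCombination_extend [CommSemiring R] {A B : Type*} [Semiring A] [Semiring B]
    [Algebra R A] [Algebra R B] (f : A →ₐ[R] B) (x : Fin m → A) (q : ℕ →₀ R) :
    f (Finsupp.linearCombination R (extend x) q) =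
      Finsupp.linearCombination R (extend fun i => f (x i)) q := by
  have f_comp_extend : f ∘ extend x = extend fun i => f (x i) := funext (map_extend f x)
  rw [← f_comp_extend]
  exact Finsupp.apply_linearCombination R f.toLinearMap _ q

theorem MinorsVanish.exists_aeval_eq_add_linearCombination [CommSemiring R] {A : Type*}
    [CommSemiring A] [Algebra R A] {x : Fin m → A} (hx : MinorsVanish x)
    (p : MvPolynomial (Fin m) R) :
    ∃ (c : R) (q : ℕ →₀ R), MvPolynomial.aeval x p =
      algebraMap R A c + Finsupp.linearCombination R (extend x) q := by
  induction p using MvPolynomial.induction_on with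
  | C c => exact ⟨c, 0, by simp⟩
  | add p₁ p₂ ih₁ ih₂ =>
    obtain ⟨c₁, q₁, h₁⟩ := ih₁
    obtain ⟨c₂, q₂, h₂⟩ := ih₂
    refine ⟨c₁ + c₂, q₁ + q₂, ?_⟩
    rw [map_add, map_add, map_add, h₁, h₂, add_add_add_comm]
  | mul_X p i ih =>
    obtain ⟨c, q, h⟩ := ih
    have linearCombination_mul : Finsupp.linearCombination R (extend x) q * x i =
        Finsupp.linearCombination R (extend x) (q.mapDomain (· + i + m)) := by
      rw [Finsupp.linearCombination_mapDomain, ← LinearMap.mulRight_apply (R := R),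
        Finsupp.apply_linearCombination]
      congr 2 with k
      simp [← hx.extend_mul_extend, extend_coe]
    refine ⟨0, Finsupp.single (i : ℕ) c + q.mapDomain (· + i + m), ?_⟩
    rw [map_mul, h, MvPolynomial.aeval_X, add_mul, linearCombination_mul, map_zero, zero_add,
      map_add, Finsupp.linearCombination_single, extend_coe, Algebra.smul_def]

theorem eq_zero_of_C_add_linearCombination_X_pow_eq_zero [Semiring R] {c : R} {q : ℕ →₀ R}
    (h : Polynomial.C c +
      Finsupp.linearCombination R (fun k => (Polynomial.X : Polynomial R) ^ (m + k)) q = 0) :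
    c = 0 ∧ q = 0 := by
  have zero_ne_add (k : ℕ) : 0 ≠ m + k := (Nat.add_pos_left (NeZero.pos m) k).ne
  have coeff_eq (n : ℕ) := congrArg (Polynomial.coeff · n) h
  simp only [Finsupp.linearCombination_apply, Finsupp.sum, Polynomial.coeff_add,
    Polynomial.coeff_C, Polynomial.finsetSum_coeff, Polynomial.coeff_smul,
    Polynomial.coeff_X_pow, Polynomial.coeff_zero] at coeff_eq
  refine ⟨by simpa [zero_ne_add] using coeff_eq 0, ?_⟩
  ext k
  simpa [NeZero.ne m] using coeff_eq (m + k)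

/-- The determinantal ideal generated by the `2 × 2` minors of the matrix with rows
`X₀, …, X_{m-1}` and `X₁, …, X_{m-1}, X₀²`. -/
noncomputable def minorIdeal (R : Type*) [CommRing R] (m : ℕ) [NeZero m] :
    Ideal (MvPolynomial (Fin m) R) :=
  Ideal.span {p | ∃ i j : Fin m, i < j ∧
    p = MvPolynomial.X i * extend MvPolynomial.X (j + 1) -
      MvPolynomial.X j * extend MvPolynomial.X (i + 1)}

variable [CommRing R]

theorem minorIdeal_le_ker_iff {A : Type*} [Ring A] (f : MvPolynomial (Fin m) R →+* A) :
    minorIdeal R m ≤ RingHom.ker f ↔ MinorsVanish (fun i => f (MvPolynomial.X i)) := by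
  have mem_ker_iff (i j : Fin m) :
      MvPolynomial.X i * extend MvPolynomial.X (j + 1) -
        MvPolynomial.X j * extend MvPolynomial.X (i + 1) ∈ RingHom.ker f ↔
      f (MvPolynomial.X i) * extend (fun i => f (MvPolynomial.X i)) (j + 1) =
        f (MvPolynomial.X j) * extend (fun i => f (MvPolynomial.X i)) (i + 1) := by
    rw [RingHom.mem_ker, map_sub, sub_eq_zero, map_mul, map_mul, map_extend, map_extend]
  rw [minorIdeal, Ideal.span_le]
  constructor
  · exact fun h i j hij => (mem_ker_iff i j).1 (h ⟨i, j, hij, rfl⟩)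
  · rintro h _ ⟨i, j, hij, rfl⟩
    exact (mem_ker_iff i j).2 (h i j hij)

theorem exists_sub_linearCombination_mem_minorIdeal (p : MvPolynomial (Fin m) R) :
    ∃ (c : R) (q : ℕ →₀ R), p - (MvPolynomial.C c +
      Finsupp.linearCombination R (extend MvPolynomial.X) q) ∈ minorIdeal R m := by
  let π := Ideal.Quotient.mkₐ R (minorIdeal R m)
  have minorsVanish : MinorsVanish (fun i => π (MvPolynomial.X i)) :=
    (minorIdeal_le_ker_iff (Ideal.Quotient.mk _)).1 Ideal.mk_ker.ge
  obtain ⟨c, q, h⟩ := minorsVanish.exists_aeval_eq_add_linearCombination p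
  refine ⟨c, q, Ideal.Quotient.eq.1 ?_⟩
  change π p = π _
  rw [map_add, map_linearCombination_extend, ← MvPolynomial.algebraMap_eq, AlgHom.commutes]
  exact (DFunLike.congr_fun (MvPolynomial.aeval_unique π) p).trans h

theorem ker_aeval_X_pow_eq_minorIdeal :
    RingHom.ker (MvPolynomial.aeval
      (fun i : Fin m => (Polynomial.X : Polynomial R) ^ (m + (i : ℕ)))) = minorIdeal R m := by
  set φ := MvPolynomial.aeval (R := R)
    (fun i : Fin m => (Polynomial.X : Polynomial R) ^ (m + (i : ℕ)))
  have φ_X (i : Fin m) : φ (MvPolynomial.X i) = Polynomial.X ^ (m + (i : ℕ)) :=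
    MvPolynomial.aeval_X _ i
  have minorIdeal_le : minorIdeal R m ≤ RingHom.ker φ := by
    refine (minorIdeal_le_ker_iff (φ : MvPolynomial (Fin m) R →+* Polynomial R)).2 ?_
    simpa only [RingHom.coe_coe, φ_X] using minorsVanish_pow_add Polynomial.X
  refine le_antisymm (fun p hp => ?_) minorIdeal_le
  obtain ⟨c, q, hcq⟩ := exists_sub_linearCombination_mem_minorIdeal p
  have image_eq_zero : Polynomial.C c +
      Finsupp.linearCombination R (fun k => Polynomial.X ^ (m + k)) q = 0 := by
    have h := (Submodule.sub_mem_iff_right _ hp).1 (minorIdeal_le hcq)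
    rw [RingHom.mem_ker, map_add, map_linearCombination_extend, ← MvPolynomial.algebraMap_eq,
      AlgHom.commutes] at h
    simpa only [Polynomial.algebraMap_eq, φ_X, funext (extend_pow_add Polynomial.X)] using h
  obtain ⟨rfl, rfl⟩ := eq_zero_of_C_add_linearCombination_X_pow_eq_zero image_eq_zero
  simpa using hcq

end Algebra

end MonomialCurve

theorem stmt_0_general {R : Type*} [CommRing R] (m : ℕ) [NeZero m]
    (σ : Fin m → MvPolynomial (Fin m) R)
    (hσ : ∀ k : Fin m, σ k =
      if h : (k : ℕ) + 1 < m then MvPolynomial.X ⟨(k : ℕ) + 1, h⟩ else MvPolynomial.X 0 ^ 2) :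
    RingHom.ker (MvPolynomial.aeval
        (fun i : Fin m => (Polynomial.X : Polynomial R) ^ (m + (i : ℕ))) :
        MvPolynomial (Fin m) R →ₐ[R] Polynomial R) =
    Ideal.span {p : MvPolynomial (Fin m) R |
      ∃ i j : Fin m, i < j ∧ p = MvPolynomial.X i * σ j - MvPolynomial.X j * σ i} := by
  simp only [hσ, ← MonomialCurve.extend_coe_succ]
  exact MonomialCurve.ker_aeval_X_pow_eq_minorIdeal

/-- For `m ≥ 2`, the kernel of the ℂ-algebra map `ℂ[X_0,…,X_{m−1}] → ℂ[T]`, `X_i ↦ T^{m+i}`,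
equals the ideal generated by the 2×2 minors `X_i·σ(j) − X_j·σ(i)` (for `i < j`) of the
matrix with rows `(X_0,…,X_{m−1})` and `(X_1,…,X_{m−1},X_0²)`, where `σ(k) = X_{k+1}`
for `k < m−1` and `σ(m−1) = X_0²`. -/
theorem stmt_0 (m : ℕ) (hm : 2 ≤ m)
    (σ : Fin m → MvPolynomial (Fin m) ℂ)
    (hσ : ∀ k : Fin m, σ k =
      if h : (k : ℕ) + 1 < m then MvPolynomial.X (⟨(k : ℕ) + 1, h⟩ : Fin m)
      else (MvPolynomial.X (⟨0, by omega⟩ : Fin m)) ^ 2) :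
    RingHom.ker (MvPolynomial.aeval
        (fun i : Fin m => (Polynomial.X : Polynomial ℂ) ^ (m + (i : ℕ))) :
        MvPolynomial (Fin m) ℂ →ₐ[ℂ] Polynomial ℂ) =
    Ideal.span {p : MvPolynomial (Fin m) ℂ |
      ∃ i j : Fin m, i < j ∧ p = MvPolynomial.X i * σ j - MvPolynomial.X j * σ i} := by
  have : NeZero m := ⟨by omega⟩
  exact stmt_0_general m σ hσ
end

section
/- For every integer n ≥ 2, let S be the additive submonoid of ℕ generated by {n+1, n+2, …, 2n} ∪ {2n+2}. Then S is symmetric with Frobenius number 2n+1: for every natural number k with k ≤ 2n+1, one has k ∈ S if and only if 2n+1−k ∉ S. -/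
/-!
A sum of two nonzero elements of `S` is at least `2(n+1)`, so up to `2n+1` the semigroup consists of
`0` and the generators `n+1, …, 2n` alone. The reflection `k ↦ 2n+1-k` exchanges `0` with `2n+1` and
`{n+1, …, 2n}` with `{1, …, n}`, hence members with gaps.
-/

section OrderedMonoid

variable {M : Type*} [AddMonoid M] [Preorder M] [AddLeftMono M] [AddRightMono M]
  {X : Set M} {a x : M}

theorem eq_zero_or_mem_or_add_self_le_of_mem_closure (ha : 0 ≤ a) (hX : X ⊆ Set.Ici a)
    (hx : x ∈ AddSubmonoid.closure X) : x = 0 ∨ x ∈ X ∨ a + a ≤ x := by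
  have le_of_mem_or {y : M} (hy : y ∈ X ∨ a + a ≤ y) : a ≤ y :=
    hy.elim (fun hyX ↦ hX hyX) (le_add_of_nonneg_left ha).trans
  induction hx using AddSubmonoid.closure_induction with
  | mem y hy => exact .inr (.inl hy)
  | zero => exact .inl rfl
  | add y z _ _ hy hz =>
    rcases hy with rfl | hy
    · rwa [zero_add]
    rcases hz with rfl | hz
    · rw [add_zero]
      exact .inr hy
    exact .inr (.inr (add_le_add (le_of_mem_or hy) (le_of_mem_or hz)))

theorem mem_closure_iff_of_not_add_self_le (ha : 0 ≤ a) (hX : X ⊆ Set.Ici a)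
    (hx : ¬a + a ≤ x) : x ∈ AddSubmonoid.closure X ↔ x = 0 ∨ x ∈ X := by
  constructor
  · intro hmem
    simpa only [hx, or_false] using eq_zero_or_mem_or_add_self_le_of_mem_closure ha hX hmem
  · rintro (rfl | hxX)
    · exact zero_mem _
    · exact AddSubmonoid.subset_closure hxX

end OrderedMonoid

theorem mem_closure_Icc_union_singleton_iff {n k : ℕ} (hk : k ≤ 2 * n + 1) :
    k ∈ AddSubmonoid.closure (Set.Icc (n + 1) (2 * n) ∪ {2 * n + 2}) ↔
      k = 0 ∨ k ∈ Set.Icc (n + 1) (2 * n) := by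
  have generators_ge : Set.Icc (n + 1) (2 * n) ∪ {2 * n + 2} ⊆ Set.Ici (n + 1) :=
    Set.union_subset Set.Icc_subset_Ici_self (Set.singleton_subset_iff.2 (Set.mem_Ici.2 (by lia)))
  have ne_last : k ≠ 2 * n + 2 := by lia
  rw [mem_closure_iff_of_not_add_self_le (Nat.zero_le _) generators_ge (by lia)]
  simp only [Set.mem_union, Set.mem_singleton_iff, ne_last, or_false]

/-- For `n ≥ 2`, the additive submonoid `S` of ℕ generated by `{n+1, …, 2n} ∪ {2n+2}` is
symmetric with Frobenius number `2n+1`: for every `k ≤ 2n+1`, `k ∈ S ↔ 2n+1−k ∉ S`. -/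
theorem stmt_5 (n : ℕ) (hn : 2 ≤ n) (S : AddSubmonoid ℕ)
    (hS : S = AddSubmonoid.closure (Set.Icc (n + 1) (2 * n) ∪ {2 * n + 2})) :
    ∀ k : ℕ, k ≤ 2 * n + 1 → (k ∈ S ↔ (2 * n + 1 - k) ∉ S) := by
  intro k hk
  rw [hS, mem_closure_Icc_union_singleton_iff hk,
    mem_closure_Icc_union_singleton_iff (Nat.sub_le _ k), Set.mem_Icc, Set.mem_Icc]
  lia
end

section
/- Let r ≥ 3 be an integer, P = MvPolynomial (Fin r) ℂ, 𝔪 the ideal of P generated by the variables, I = 𝔪², and B = P/I. Let d̄ : I/I² → B ⊗_P Ω_{P/ℂ} be the B-linear map induced by the universal derivation d : P → Ω_{P/ℂ}, and let T¹ be the cokernel of the B-linear map Hom_B(B ⊗_P Ω_{P/ℂ}, B) → Hom_B(I/I², B) given by precomposition with d̄. Then dim_ℂ T¹ = (1/2)(r−1)r(r+2). -/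
set_option synthInstance.maxHeartbeats 1000000
open TensorProduct

/-!
Every homomorphism `𝔪² → B` has no constant terms: compare both sides of
`x_k g(x_i x_j) = x_i g(x_k x_j)` for `k ≠ i`. It is therefore given by assigning an arbitrary
linear form to each quadratic monomial, so `Hom_B(I/I², B)` is free of rank `r * (r + 1).choose 2`.
A vector field acts through its constant part only, since `∂_i` maps `𝔪²` into `𝔪` and `𝔪` kills
the linear forms. The `r` constant vector fields are independent, because the linear coefficients of
their values on the monomials `x_i x_k`, `k ≠ i`, recover their coordinates in any characteristic.
-/

open MvPolynomial

section Conormal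

variable (R : Type*) {P : Type*} [CommRing R] [CommRing P] [Algebra R P] (I : Ideal P)

/-- The identification `Hom_B(I/I², B) ≃ Hom_P(I, B)` for `B = P/I`. -/
noncomputable def conormalDualEquiv :
    Module.Dual (P ⧸ I) I.Cotangent ≃ₗ[R] (I →ₗ[P] P ⧸ I) where
  toFun φ := φ.restrictScalars P ∘ₗ I.toCotangent
  map_add' _ _ := rfl
  map_smul' _ _ := rfl
  invFun g := LinearMap.extendScalarsOfSurjective Ideal.Quotient.mk_surjective
    (Ideal.Cotangent.lift g fun x y ↦ by
      have hxy : x * y = (x : P) • y := rfl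
      rw [hxy, map_smul, Algebra.smul_def, Ideal.Quotient.algebraMap_eq,
        Ideal.Quotient.eq_zero_iff_mem.2 x.2, zero_mul])
  left_inv φ := by
    ext x
    obtain ⟨y, rfl⟩ := I.toCotangent_surjective x
    rfl
  right_inv _ := rfl

end Conormal

section Exponents

theorem multichoose_two_mul_self (n : ℕ) :
    n.multichoose 2 * n = (n - 1) * n * (n + 2) / 2 + n := by
  obtain _ | n := n
  · rfl
  have hchoose : (n + 1).multichoose 2 * 2 = (n + 2) * (n + 1) := by
    rw [Nat.multichoose_eq, Nat.choose_two_right,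
      Nat.div_mul_cancel (Nat.even_mul_pred_self _).two_dvd]
    rfl
  rw [← Nat.add_mul_div_right _ _ two_pos, eq_comm, Nat.add_sub_cancel]
  refine Nat.div_eq_of_eq_mul_left two_pos ?_
  nlinarith only [hchoose]

/-- The exponents of the monomials of degree `n` in the variables `σ`. -/
abbrev HomogeneousExponent (σ : Type*) (n : ℕ) := {m : σ →₀ ℕ // m.degree = n}

namespace HomogeneousExponent

variable {σ : Type*}

/-- The exponent of the quadratic monomial `x_i * x_j`. -/
noncomputable def pair (i j : σ) : HomogeneousExponent σ 2 :=
  ⟨.single i 1 + .single j 1, by simp⟩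

theorem exists_eq_pair (m : HomogeneousExponent σ 2) : ∃ i j, m = pair i j := by
  obtain ⟨m, hm⟩ := m
  obtain ⟨u, hu, hu_deg⟩ := Finsupp.exists_le_degree_eq m 1 (by lia)
  obtain ⟨v, rfl⟩ := le_iff_exists_add.1 hu
  have hv_deg : v.degree = 1 := by rw [map_add] at hm; lia
  obtain ⟨i, rfl⟩ := Finsupp.range_single_one.ge hu_deg
  obtain ⟨j, rfl⟩ := Finsupp.range_single_one.ge hv_deg
  exact ⟨i, j, rfl⟩

variable [Fintype σ]

noncomputable instance (n : ℕ) : Fintype (HomogeneousExponent σ n) :=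
  (Finsupp.finite_of_degree_eq n).fintype

theorem card_eq_multichoose (n : ℕ) :
    Fintype.card (HomogeneousExponent σ n) = (Fintype.card σ).multichoose n := by
  classical
  rw [← Sym.card_sym_eq_multichoose]
  exact Fintype.card_congr (Sym.equivNatSum σ n).symm

end HomogeneousExponent

end Exponents

section Polynomial

variable {σ R : Type*} [CommRing R]

theorem coeff_mul_of_mem_pow_idealOfVars {f : MvPolynomial σ R} {n : ℕ}
    (hf : f ∈ idealOfVars σ R ^ n) (p : MvPolynomial σ R) (m : HomogeneousExponent σ n) :
    coeff m (p * f) = coeff 0 p * coeff m f := by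
  have hsub : (p - C (coeff 0 p)) * f ∈ idealOfVars σ R ^ (n + 1) := by
    rw [pow_succ']
    refine Ideal.mul_mem_mul ?_ hf
    rw [← pow_one (idealOfVars σ R), mem_pow_idealOfVars_iff']
    intro u hu
    obtain rfl := (Finsupp.degree_eq_zero_iff u).1 (by lia)
    simp
  have hcoeff := (mem_pow_idealOfVars_iff' _ _).1 hsub m (by simp [m.2])
  rwa [sub_mul, coeff_sub, coeff_C_mul, sub_eq_zero] at hcoeff

theorem pderiv_mem_pow_idealOfVars {f : MvPolynomial σ R} {n : ℕ}
    (hf : f ∈ idealOfVars σ R ^ (n + 1)) (i : σ) : pderiv i f ∈ idealOfVars σ R ^ n := by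
  rw [mem_pow_idealOfVars_iff'] at hf ⊢
  intro m hm
  rw [coeff_pderiv, hf _ (by simpa using hm), zero_mul]

theorem kaehler_D_eq_sum_pderiv [Fintype σ] (f : MvPolynomial σ R) :
    KaehlerDifferential.D R _ f =
      ∑ i, pderiv i f • KaehlerDifferential.D R (MvPolynomial σ R) (X i) := by
  simpa using ((KaehlerDifferential.mvPolynomialBasis R σ).sum_repr
    (KaehlerDifferential.D R _ f)).symm

end Polynomial

/-- The coordinate ring `R[x]/𝔪²` of the first-order neighbourhood of the origin in affine space. -/
abbrev FatPoint (σ R : Type*) [CommRing R] := MvPolynomial σ R ⧸ idealOfVars σ R ^ 2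

namespace FatPoint

variable {σ R : Type*} [CommRing R]

section Coefficients

/-- The coefficient of `x ^ m` on `R[x]/𝔪ⁿ`, which is well defined for `|m| < n`. -/
noncomputable def truncCoeff {n : ℕ} (m : σ →₀ ℕ) (hm : m.degree < n) :
    (MvPolynomial σ R ⧸ idealOfVars σ R ^ n) →ₗ[R] R :=
  Submodule.liftQ ((idealOfVars σ R ^ n).restrictScalars R) (lcoeff R m)
      (fun p hp ↦ (mem_pow_idealOfVars_iff' n p).1 hp m hm) ∘ₗ
    (Submodule.Quotient.restrictScalarsEquiv R _).symm.toLinearMap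

/-- The constant coefficient on `R[x]/𝔪²`. -/
noncomputable def constCoeff : FatPoint σ R →ₗ[R] R := truncCoeff 0 (by simp)

/-- The coefficient of `x_k` on `R[x]/𝔪²`. -/
noncomputable def linCoeff (k : σ) : FatPoint σ R →ₗ[R] R := truncCoeff (.single k 1) (by simp)

@[simp]
theorem constCoeff_mk (p : MvPolynomial σ R) :
    constCoeff (Ideal.Quotient.mk _ p) = coeff 0 p := rfl

@[simp]
theorem linCoeff_mk (k : σ) (p : MvPolynomial σ R) :
    linCoeff k (Ideal.Quotient.mk _ p) = coeff (.single k 1) p := rfl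

@[ext]
theorem ext {b c : FatPoint σ R} (hconst : constCoeff b = constCoeff c)
    (hlin : ∀ k, linCoeff k b = linCoeff k c) : b = c := by
  obtain ⟨p, rfl⟩ := Ideal.Quotient.mk_surjective b
  obtain ⟨q, rfl⟩ := Ideal.Quotient.mk_surjective c
  rw [Ideal.Quotient.eq, mem_pow_idealOfVars_iff']
  intro m hm
  rw [coeff_sub, sub_eq_zero]
  obtain hm | hm : m.degree = 0 ∨ m.degree = 1 := by lia
  · obtain rfl := (Finsupp.degree_eq_zero_iff m).1 hm
    exact hconst
  · obtain ⟨k, rfl⟩ := (Finsupp.range_single_one (σ := σ)).ge hm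
    exact hlin k

theorem linCoeff_smul (k : σ) (p : MvPolynomial σ R) (b : FatPoint σ R) :
    linCoeff k (p • b) =
      coeff 0 p * linCoeff k b + coeff (.single k 1) p * constCoeff b := by
  classical
  obtain ⟨q, rfl⟩ := Ideal.Quotient.mk_surjective b
  change coeff _ (p * q) = _
  simp [coeff_mul, Finsupp.antidiagonal_single, Finset.Nat.antidiagonal_succ]

@[simp]
theorem constCoeff_smul (p : MvPolynomial σ R) (b : FatPoint σ R) :
    constCoeff (p • b) = coeff 0 p * constCoeff b := by
  obtain ⟨q, rfl⟩ := Ideal.Quotient.mk_surjective b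
  change coeff _ (p * q) = _
  simp [← constantCoeff_eq]

end Coefficients

section LinearForm

variable [Fintype σ]

/-- The class in `R[x]/𝔪²` of the linear form `∑ k, v k * x_k`. -/
noncomputable def linearForm : (σ → R) →ₗ[R] FatPoint σ R :=
  Fintype.linearCombination R fun k ↦ Ideal.Quotient.mk _ (X k)

@[simp]
theorem constCoeff_linearForm (v : σ → R) : constCoeff (linearForm v) = 0 := by
  simp [linearForm, Fintype.linearCombination_apply]

@[simp]
theorem linCoeff_linearForm (k : σ) (v : σ → R) : linCoeff k (linearForm v) = v k := by
  classical
  simp [linearForm, Fintype.linearCombination_apply, coeff_X, Finsupp.single_left_inj]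

theorem smul_linearForm (p : MvPolynomial σ R) (v : σ → R) :
    p • linearForm v = coeff 0 p • linearForm v := by
  ext <;> simp [linCoeff_smul]

end LinearForm

section NormalModule

variable (σ R) in
/-- The module `Hom_P(𝔪², P/𝔪²)` of first-order embedded deformations of `R[x]/𝔪²`, where
`P = R[x]`. -/
abbrev NormalModule := ↥(idealOfVars σ R ^ 2) →ₗ[MvPolynomial σ R] FatPoint σ R

/-- The monomials of degree two, as elements of `𝔪²`. -/
noncomputable def quadMonomial (m : HomogeneousExponent σ 2) : ↥(idealOfVars σ R ^ 2) :=
  ⟨monomial m 1, pow_idealOfVars_eq_span (R := R) 2 ▸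
    Ideal.subset_span (Set.mem_image_of_mem _ m.2)⟩

theorem X_smul_quadMonomial_pair (i j k : σ) :
    (X k : MvPolynomial σ R) • quadMonomial (R := R) (.pair i j) =
      (X i : MvPolynomial σ R) • quadMonomial (.pair k j) := by
  ext1
  simp only [quadMonomial, HomogeneousExponent.pair, Submodule.coe_smul, smul_eq_mul, X,
    monomial_mul]
  rw [add_left_comm]

theorem constCoeff_apply_quadMonomial [Nontrivial σ] (g : NormalModule σ R)
    (m : HomogeneousExponent σ 2) : constCoeff (g (quadMonomial m)) = 0 := by
  classical
  obtain ⟨i, j, rfl⟩ := m.exists_eq_pair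
  obtain ⟨k, hk⟩ := exists_ne i
  have h := congrArg (fun f ↦ linCoeff k (g f)) (X_smul_quadMonomial_pair (R := R) i j k)
  simpa [linCoeff_smul, coeff_X, Finsupp.single_left_inj, hk.symm] using h

/-- The coordinates of `g ∈ Hom_P(𝔪², P/𝔪²)`: the linear coefficients of the images of the
monomials of degree two. -/
noncomputable def normalCoords :
    NormalModule σ R →ₗ[R] (HomogeneousExponent σ 2 → σ → R) where
  toFun g m k := linCoeff k (g (quadMonomial m))
  map_add' _ _ := by ext; simp
  map_smul' _ _ := by ext; simp

theorem normalCoords_injective [Nontrivial σ] :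
    Function.Injective (normalCoords (σ := σ) (R := R)) := by
  rw [injective_iff_map_eq_zero]
  intro g hg
  rw [Submodule.linearMap_eq_zero_iff_of_eq_span _ (pow_idealOfVars_eq_span 2)]
  rintro ⟨_, m, hm, rfl⟩
  refine ext ((constCoeff_apply_quadMonomial g ⟨m, hm⟩).trans (map_zero _).symm) fun k ↦ ?_
  exact (congrFun₂ hg ⟨m, hm⟩ k).trans (map_zero _).symm

variable [Fintype σ]

/-- The homomorphism `𝔪² → R[x]/𝔪²` which sends each quadratic monomial `x ^ m` to the linear form
with coefficients `a m`. -/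
noncomputable def normalOfCoords (a : HomogeneousExponent σ 2 → σ → R) : NormalModule σ R where
  toFun f := ∑ m : HomogeneousExponent σ 2, coeff m f.1 • linearForm (a m)
  map_add' f g := by simp [add_smul, Finset.sum_add_distrib]
  map_smul' p f := by
    rw [RingHom.id_apply, Finset.smul_sum]
    refine Finset.sum_congr rfl fun m _ ↦ ?_
    rw [Submodule.coe_smul, smul_eq_mul, coeff_mul_of_mem_pow_idealOfVars f.2, smul_comm p,
      smul_linearForm, smul_smul, mul_comm]

theorem normalCoords_normalOfCoords (a : HomogeneousExponent σ 2 → σ → R) :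
    normalCoords (normalOfCoords a) = a := by
  classical
  funext m k
  simp [normalCoords, normalOfCoords, quadMonomial, coeff_monomial, ← Subtype.ext_iff]

/-- The coordinates of an element of `Hom(I/I², B)`, for `I = 𝔪²` and `B = R[x]/𝔪²`. -/
noncomputable def dualCoordsEquiv [Nontrivial σ] :
    Module.Dual (FatPoint σ R) (idealOfVars σ R ^ 2).Cotangent ≃ₗ[R]
      (HomogeneousExponent σ 2 → σ → R) :=
  conormalDualEquiv R (idealOfVars σ R ^ 2) ≪≫ₗ LinearEquiv.ofBijective normalCoords
    ⟨normalCoords_injective, fun a ↦ ⟨_, normalCoords_normalOfCoords a⟩⟩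

end NormalModule

section Tangent

/-- The coordinates of the homomorphism `𝔪² → R[x]/𝔪²` induced by the derivation `∂/∂x_i`. -/
noncomputable def pderivCoords (i : σ) : HomogeneousExponent σ 2 → σ → R :=
  fun m k ↦ coeff (.single k 1) (pderiv i (quadMonomial m).1)

theorem pderivCoords_pair [DecidableEq σ] {i k : σ} (hik : k ≠ i) (j : σ) :
    pderivCoords (R := R) j (.pair k i) k = if j = i then 1 else 0 := by
  rw [pderivCoords, coeff_pderiv, quadMonomial, coeff_monomial, HomogeneousExponent.pair]
  obtain rfl | hji := eq_or_ne j i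
  · simp [hik.symm]
  · simp [Finsupp.single_left_inj, hji, hji.symm]

theorem linearIndependent_pderivCoords [Nontrivial σ] :
    LinearIndependent R (pderivCoords : σ → HomogeneousExponent σ 2 → σ → R) := by
  classical
  rw [linearIndependent_iff']
  intro s β hβ i hi
  obtain ⟨k, hk⟩ := exists_ne i
  simpa [pderivCoords_pair hk, hi] using congrFun₂ hβ (.pair k i) k

variable [Fintype σ] [Nontrivial σ]

theorem dualCoordsEquiv_dualMap
    {dbar : (idealOfVars σ R ^ 2).Cotangent →ₗ[FatPoint σ R]
      FatPoint σ R ⊗[MvPolynomial σ R] Ω[MvPolynomial σ R⁄R]}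
    (hdbar : ∀ x : ↥(idealOfVars σ R ^ 2), dbar ((idealOfVars σ R ^ 2).toCotangent x) =
      1 ⊗ₜ[MvPolynomial σ R] KaehlerDifferential.D R (MvPolynomial σ R) x.1)
    (ψ : Module.Dual (FatPoint σ R) (FatPoint σ R ⊗[MvPolynomial σ R] Ω[MvPolynomial σ R⁄R])) :
    dualCoordsEquiv (dbar.dualMap ψ) =
      ∑ i, constCoeff (ψ (1 ⊗ₜ KaehlerDifferential.D R _ (X i))) • pderivCoords i := by
  funext m k
  change linCoeff k (ψ (dbar (Ideal.toCotangent _ (quadMonomial m)))) = _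
  rw [hdbar, kaehler_D_eq_sum_pderiv, TensorProduct.tmul_sum, map_sum, map_sum, Finset.sum_apply,
    Finset.sum_apply]
  refine Finset.sum_congr rfl fun i _ ↦ ?_
  have hconst : coeff 0 (pderiv i (quadMonomial (R := R) m).1) = 0 :=
    (mem_pow_idealOfVars_iff' 1 _).1 (pderiv_mem_pow_idealOfVars (quadMonomial m).2 i) 0 (by simp)
  rw [tmul_smul, LinearMap.map_smul_of_tower, linCoeff_smul, hconst, zero_mul, zero_add, mul_comm]
  rfl

theorem map_range_dualMap
    {dbar : (idealOfVars σ R ^ 2).Cotangent →ₗ[FatPoint σ R]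
      FatPoint σ R ⊗[MvPolynomial σ R] Ω[MvPolynomial σ R⁄R]}
    (hdbar : ∀ x : ↥(idealOfVars σ R ^ 2), dbar ((idealOfVars σ R ^ 2).toCotangent x) =
      1 ⊗ₜ[MvPolynomial σ R] KaehlerDifferential.D R (MvPolynomial σ R) x.1) :
    ((LinearMap.range dbar.dualMap).restrictScalars R).map
        (dualCoordsEquiv (σ := σ) (R := R)).toLinearMap =
      Submodule.span R (Set.range pderivCoords) := by
  ext v
  rw [Submodule.mem_span_range_iff_exists_fun]
  constructor
  · rintro ⟨_, ⟨ψ, rfl⟩, rfl⟩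
    exact ⟨_, (dualCoordsEquiv_dualMap hdbar ψ).symm⟩
  · rintro ⟨β, rfl⟩
    let b := (KaehlerDifferential.mvPolynomialBasis R σ).baseChange (FatPoint σ R)
    refine ⟨_, ⟨b.constr R fun i ↦ algebraMap R _ (β i), rfl⟩, ?_⟩
    refine (dualCoordsEquiv_dualMap hdbar _).trans (Finset.sum_congr rfl fun i _ ↦ ?_)
    have hb : b i = 1 ⊗ₜ KaehlerDifferential.D R _ (X i) := by simp [b]
    rw [← hb, b.constr_basis]
    congr 1
    exact coeff_zero_C _

end Tangent

end FatPoint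

theorem stmt_7_general {σ R : Type*} [Fintype σ] [Nontrivial σ] [CommRing R] [IsDomain R]
    (dbar : (idealOfVars σ R ^ 2).Cotangent →ₗ[FatPoint σ R]
      FatPoint σ R ⊗[MvPolynomial σ R] Ω[MvPolynomial σ R⁄R])
    (hdbar : ∀ x : ↥(idealOfVars σ R ^ 2), dbar ((idealOfVars σ R ^ 2).toCotangent x) =
      1 ⊗ₜ[MvPolynomial σ R] KaehlerDifferential.D R (MvPolynomial σ R) x.1) :
    Module.finrank R (Module.Dual (FatPoint σ R) (idealOfVars σ R ^ 2).Cotangent ⧸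
        LinearMap.range dbar.dualMap) =
      (Fintype.card σ - 1) * Fintype.card σ * (Fintype.card σ + 2) / 2 := by
  let S := Submodule.span R (Set.range (FatPoint.pderivCoords (σ := σ) (R := R)))
  have hS : Module.finrank R S = Fintype.card σ :=
    finrank_span_eq_card FatPoint.linearIndependent_pderivCoords
  have hcoords : Module.finrank R (HomogeneousExponent σ 2 → σ → R) =
      (Fintype.card σ).multichoose 2 * Fintype.card σ := by
    simp [Module.finrank_pi_fintype, HomogeneousExponent.card_eq_multichoose]
  have hquot := S.finrank_quotient_add_finrank
  rw [hS, hcoords, multichoose_two_mul_self] at hquot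
  rw [← (Submodule.Quotient.restrictScalarsEquiv R _).finrank_eq,
    (Submodule.Quotient.equiv _ S FatPoint.dualCoordsEquiv
      (FatPoint.map_range_dualMap hdbar)).finrank_eq]
  exact Nat.add_right_cancel hquot

/-- For `r ≥ 3`, `P = ℂ[X_0,…,X_{r−1}]`, `𝔪` the ideal of variables, `I = 𝔪²`, `B = P/I`,
and `d̄ : I/I² → B ⊗_P Ω_{P/ℂ}` induced by the universal derivation, the cokernel `T¹` of
`Hom_B(B ⊗_P Ω_{P/ℂ}, B) → Hom_B(I/I², B)` (precomposition with `d̄`) has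
`dim_ℂ T¹ = (1/2)(r−1)r(r+2)`. -/
theorem stmt_7 (r : ℕ) (hr : 3 ≤ r)
    (I : Ideal (MvPolynomial (Fin r) ℂ))
    (hI : I = (Ideal.span (Set.range (MvPolynomial.X : Fin r → MvPolynomial (Fin r) ℂ))) ^ 2)
    (dbar : I.Cotangent →ₗ[MvPolynomial (Fin r) ℂ ⧸ I]
      (MvPolynomial (Fin r) ℂ ⧸ I) ⊗[MvPolynomial (Fin r) ℂ]
        (KaehlerDifferential ℂ (MvPolynomial (Fin r) ℂ)))
    (hdbar : ∀ x : I, dbar (I.toCotangent x)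
      = 1 ⊗ₜ[MvPolynomial (Fin r) ℂ]
          (KaehlerDifferential.D ℂ (MvPolynomial (Fin r) ℂ) x.1)) :
    Module.finrank ℂ
      ((Module.Dual (MvPolynomial (Fin r) ℂ ⧸ I) I.Cotangent) ⧸
        LinearMap.range dbar.dualMap)
      = (r - 1) * r * (r + 2) / 2 := by
  subst hI
  have : Nontrivial (Fin r) := Fin.nontrivial_iff_two_le.2 (by lia)
  simpa only [Fintype.card_fin] using stmt_7_general dbar hdbar
end

section
/- Let r ≥ 1 be an integer, P = MvPolynomial (Fin r) ℂ with variables X_0, …, X_{r−1}, I the ideal of P generated by {X_i X_j : i ≠ j} ∪ {X_i² − X_0² : 0 ≤ i ≤ r−1} ∪ {X_0³}, and A = P/I. Then the annihilator {a ∈ A : x̄_i · a = 0 for all i} of the maximal ideal (generated by the images x̄_i of the variables) is a one-dimensional ℂ-vector space, spanned by the image of X_0². -/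
/-!
Every product `X i * X j * q` is congruent to `δᵢⱼ q(0) X_o²` modulo the ideal, so everything of
order at least two collapses onto `R • X_o²`. The functional `λ`, the sum of the coefficients of
the squares of the variables, vanishes on the ideal and computes the multiple. If all `X i`
annihilate `p` in the quotient, then evaluating `λ` on `X i * p` and on `X i * (X i * p)` shows that
the linear and the constant coefficients of `p` vanish, hence `p ≡ λ(p) X_o²`.
-/

section FatPoint

open MvPolynomial

variable {R σ : Type*}

section CommSemiring

variable [CommSemiring R]

lemma mem_idealOfVars_sq_iff (p : MvPolynomial σ R) :
    p ∈ idealOfVars σ R ^ 2 ↔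
      constantCoeff p = 0 ∧ ∀ i, coeff (Finsupp.single i 1) p = 0 := by
  rw [mem_pow_idealOfVars_iff']
  constructor
  · exact fun h ↦ ⟨h 0 (by simp), fun i ↦ h _ (by simp)⟩
  · rintro ⟨hconst, hlin⟩ m hm
    obtain hm | hm : m.degree = 0 ∨ m.degree = 1 := by lia
    · rwa [(Finsupp.degree_eq_zero_iff m).1 hm]
    · obtain ⟨i, rfl⟩ : m ∈ Set.range fun i ↦ Finsupp.single i 1 := by
        rwa [Finsupp.range_single_one]
      exact hlin i

/-- The dual socle generator of the fat point (in the sense of Macaulay's inverse systems): the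
linear functional `p ↦ ∑ k, coeff (single k 2) p`. It is defined on the monomial basis, so that
infinitely many variables are allowed. -/
noncomputable def sqCoeffSum : MvPolynomial σ R →ₗ[R] R :=
  (basisMonomials σ R).constr R (Set.indicator (Set.range fun k ↦ Finsupp.single k 2) 1)

lemma sqCoeffSum_monomial [DecidablePred (· ∈ Set.range fun k : σ ↦ Finsupp.single k 2)]
    (m : σ →₀ ℕ) (c : R) :
    sqCoeffSum (monomial m c) = if m ∈ Set.range fun k ↦ Finsupp.single k 2 then c else 0 := by
  have h : sqCoeffSum (monomial m (1 : R)) =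
      Set.indicator (Set.range fun k ↦ Finsupp.single k 2) 1 m := by
    rw [sqCoeffSum, ← congrFun (coe_basisMonomials σ R) m, Module.Basis.constr_basis]
  rw [← mul_one c, ← smul_eq_mul c 1, ← smul_monomial, map_smul, h, Set.indicator_apply]
  simp

lemma single_one_add_mem_range_single_two_iff (i : σ) (m : σ →₀ ℕ) :
    Finsupp.single i 1 + m ∈ Set.range (fun k : σ ↦ Finsupp.single k 2) ↔
      m = Finsupp.single i 1 := by
  constructor
  · rintro ⟨k, hk : Finsupp.single k 2 = _⟩
    obtain rfl : k = i := by
      by_contra hki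
      have : 0 = 1 + m i := by simpa [Finsupp.single_eq_of_ne' hki] using DFunLike.congr_fun hk i
      lia
    exact add_left_cancel (hk.symm.trans (Finsupp.single_add k 1 1))
  · rintro rfl
    exact ⟨i, Finsupp.single_add i 1 1⟩

lemma sqCoeffSum_X_mul (i : σ) (p : MvPolynomial σ R) :
    sqCoeffSum (X i * p) = coeff (Finsupp.single i 1) p := by
  classical
  induction p using MvPolynomial.induction_on' with
  | monomial m c =>
    rw [X, monomial_mul, one_mul, sqCoeffSum_monomial, coeff_monomial]
    exact if_congr (single_one_add_mem_range_single_two_iff i m) rfl rfl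
  | add p q hp hq => rw [mul_add, map_add, hp, hq, coeff_add]

lemma sqCoeffSum_X_mul_X_mul [DecidableEq σ] (i j : σ) (p : MvPolynomial σ R) :
    sqCoeffSum (X i * (X j * p)) = if i = j then constantCoeff p else 0 := by
  rw [sqCoeffSum_X_mul, coeff_X_mul', constantCoeff_eq]
  by_cases hij : i = j
  · simp [hij]
  · simp [hij, Ne.symm hij]

end CommSemiring

variable [CommRing R]

variable (R) in
/-- The ideal of the Gorenstein fat point in the coordinates `X i`. All squares of variables are
identified with that of a base variable `X o`; for a single variable this is `(X o ^ 3)`. -/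
noncomputable def fatPointIdeal (o : σ) : Ideal (MvPolynomial σ R) :=
  Ideal.span ({p | ∃ i j : σ, i ≠ j ∧ p = X i * X j} ∪ {p | ∃ i : σ, p = X i ^ 2 - X o ^ 2} ∪
    {X o ^ 3})

lemma sqCoeffSum_eq_zero_of_mem {o : σ} {p : MvPolynomial σ R} (hp : p ∈ fatPointIdeal R o) :
    sqCoeffSum p = 0 := by
  classical
  suffices h : ∀ q, sqCoeffSum (p * q) = 0 by simpa using h 1
  induction hp using Submodule.span_induction with
  | mem p hp =>
    intro q
    rcases hp with (⟨i, j, hij, rfl⟩ | ⟨i, rfl⟩) | rfl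
    · rw [mul_assoc, sqCoeffSum_X_mul_X_mul, if_neg hij]
    · rw [sub_mul, map_sub, sq, sq, mul_assoc, mul_assoc, sqCoeffSum_X_mul_X_mul,
        sqCoeffSum_X_mul_X_mul, if_pos rfl, if_pos rfl, sub_self]
    · rw [pow_succ', sq, mul_assoc, mul_assoc, sqCoeffSum_X_mul_X_mul, if_pos rfl, map_mul,
        constantCoeff_X, zero_mul]
  | zero => simp
  | add p p' _ _ hp hp' => simp [add_mul, hp, hp']
  | smul a p _ hp => exact fun q ↦ by rw [smul_eq_mul, mul_comm a, mul_assoc, hp]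

lemma mk_X_mul_X_of_ne (o : σ) {i j : σ} (hij : i ≠ j) :
    Ideal.Quotient.mk (fatPointIdeal R o) (X i * X j) = 0 :=
  Ideal.Quotient.eq_zero_iff_mem.2 <| Ideal.subset_span <| .inl <| .inl ⟨i, j, hij, rfl⟩

lemma mk_X_sq (o i : σ) :
    Ideal.Quotient.mk (fatPointIdeal R o) (X i ^ 2) =
      Ideal.Quotient.mk (fatPointIdeal R o) (X o ^ 2) :=
  Ideal.Quotient.eq.2 <| Ideal.subset_span <| .inl <| .inr ⟨i, rfl⟩

lemma mk_X_mul_X_sq (o i : σ) :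
    Ideal.Quotient.mk (fatPointIdeal R o) (X i * X o ^ 2) = 0 := by
  by_cases hi : i = o
  · rw [hi, ← pow_succ']
    exact Ideal.Quotient.eq_zero_iff_mem.2 <| Ideal.subset_span <| .inr rfl
  · rw [sq, ← mul_assoc, map_mul, mk_X_mul_X_of_ne o hi, zero_mul]

lemma mk_mul_X_sq (o : σ) (p : MvPolynomial σ R) :
    Ideal.Quotient.mk (fatPointIdeal R o) (p * X o ^ 2) =
      constantCoeff p • Ideal.Quotient.mk (fatPointIdeal R o) (X o ^ 2) := by
  induction p using MvPolynomial.induction_on with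
  | C c => rw [constantCoeff_C, ← smul_eq_C_mul]; rfl
  | add p q hp hq => rw [add_mul, map_add, hp, hq, map_add, add_smul]
  | mul_X p i _ => simp [mul_assoc, -map_pow, map_mul _ p, mk_X_mul_X_sq]

lemma mk_X_mul_X_mul (o i j : σ) (p : MvPolynomial σ R) :
    Ideal.Quotient.mk (fatPointIdeal R o) (X i * (X j * p)) =
      sqCoeffSum (X i * (X j * p)) • Ideal.Quotient.mk (fatPointIdeal R o) (X o ^ 2) := by
  classical
  rw [sqCoeffSum_X_mul_X_mul, ← mul_assoc, map_mul]
  split_ifs with hij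
  · rw [hij, ← sq, mk_X_sq, mul_comm, ← map_mul, mk_mul_X_sq]
  · rw [mk_X_mul_X_of_ne o hij, zero_mul, zero_smul]

lemma mk_eq_sqCoeffSum_smul (o : σ) {p : MvPolynomial σ R} (hp : p ∈ idealOfVars σ R ^ 2) :
    Ideal.Quotient.mk (fatPointIdeal R o) p =
      sqCoeffSum p • Ideal.Quotient.mk (fatPointIdeal R o) (X o ^ 2) := by
  suffices h : ∀ q, Ideal.Quotient.mk (fatPointIdeal R o) (q * p) =
      sqCoeffSum (q * p) • Ideal.Quotient.mk (fatPointIdeal R o) (X o ^ 2) by simpa using h 1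
  rw [sq, Ideal.span_mul_span'] at hp
  induction hp using Submodule.span_induction with
  | mem p hp =>
    obtain ⟨_, ⟨i, rfl⟩, _, ⟨j, rfl⟩, rfl⟩ := hp
    intro q
    simpa only [mul_assoc, mul_comm q] using mk_X_mul_X_mul o i j q
  | zero => simp
  | add p p' _ _ hp hp' => exact fun q ↦ by rw [mul_add, map_add, hp, hp', map_add, add_smul]
  | smul a p _ hp => exact fun q ↦ by rw [smul_eq_mul, ← mul_assoc, hp]

lemma mem_idealOfVars_sq_of_X_mul_mem {o : σ} {p : MvPolynomial σ R}
    (hp : ∀ i, X i * p ∈ fatPointIdeal R o) : p ∈ idealOfVars σ R ^ 2 := by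
  classical
  refine (mem_idealOfVars_sq_iff p).2 ⟨?_, fun i ↦ ?_⟩
  · simpa only [sqCoeffSum_X_mul_X_mul, if_true] using
      sqCoeffSum_eq_zero_of_mem (Ideal.mul_mem_left _ (X o) (hp o))
  · simpa only [sqCoeffSum_X_mul] using sqCoeffSum_eq_zero_of_mem (hp i)

lemma smul_mk_X_sq_eq_zero_iff (o : σ) (c : R) :
    c • Ideal.Quotient.mk (fatPointIdeal R o) (X o ^ 2) = 0 ↔ c = 0 := by
  refine ⟨fun h ↦ ?_, fun h ↦ by rw [h, zero_smul]⟩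
  have hmem : C c * X o ^ 2 ∈ fatPointIdeal R o := by
    rwa [← Ideal.Quotient.eq_zero_iff_mem, mk_mul_X_sq, constantCoeff_C]
  simpa [sq, ← smul_eq_C_mul, sqCoeffSum_X_mul, coeff_X] using sqCoeffSum_eq_zero_of_mem hmem

theorem stmt_9_general (o : σ) :
    {a : MvPolynomial σ R ⧸ fatPointIdeal R o |
        ∀ i, Ideal.Quotient.mk (fatPointIdeal R o) (X i) * a = 0} =
      Submodule.span R {Ideal.Quotient.mk (fatPointIdeal R o) (X o ^ 2)} ∧
    ∀ c : R, c • Ideal.Quotient.mk (fatPointIdeal R o) (X o ^ 2) = 0 ↔ c = 0 := by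
  refine ⟨Set.ext fun a ↦ ?_, smul_mk_X_sq_eq_zero_iff o⟩
  rw [SetLike.mem_coe, Submodule.mem_span_singleton]
  constructor
  · intro ha
    obtain ⟨p, rfl⟩ := Ideal.Quotient.mk_surjective a
    have hp (i : σ) : X i * p ∈ fatPointIdeal R o := by
      rw [← Ideal.Quotient.eq_zero_iff_mem, map_mul, ha i]
    exact ⟨sqCoeffSum p, (mk_eq_sqCoeffSum_smul o (mem_idealOfVars_sq_of_X_mul_mem hp)).symm⟩
  · rintro ⟨c, rfl⟩ i
    rw [mul_smul_comm, ← map_mul, mk_X_mul_X_sq, smul_zero]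

end FatPoint

/-- For `r ≥ 1`, `P = ℂ[X_0,…,X_{r−1}]`, `I = (X_iX_j (i≠j), X_i² − X_0², X_0³)`, and
`A = P/I`, the annihilator of the maximal ideal (the socle) is one-dimensional over ℂ,
spanned by the image of `X_0²` (which is nonzero). -/
theorem stmt_9 (r : ℕ) (hr : 1 ≤ r)
    (I : Ideal (MvPolynomial (Fin r) ℂ))
    (hI : I = Ideal.span
      ({p : MvPolynomial (Fin r) ℂ | ∃ i j : Fin r, i ≠ j ∧ p = MvPolynomial.X i * MvPolynomial.X j}
        ∪ {p : MvPolynomial (Fin r) ℂ | ∃ i : Fin r,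
            p = MvPolynomial.X i ^ 2 - MvPolynomial.X (⟨0, by omega⟩ : Fin r) ^ 2}
        ∪ {MvPolynomial.X (⟨0, by omega⟩ : Fin r) ^ 3})) :
    {a : MvPolynomial (Fin r) ℂ ⧸ I |
        ∀ i : Fin r, Ideal.Quotient.mk I (MvPolynomial.X i) * a = 0}
      = ↑(Submodule.span ℂ
          {Ideal.Quotient.mk I (MvPolynomial.X (⟨0, by omega⟩ : Fin r) ^ 2)}) ∧
    Ideal.Quotient.mk I (MvPolynomial.X (⟨0, by omega⟩ : Fin r) ^ 2) ≠ 0 := by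
  obtain rfl : I = fatPointIdeal ℂ ⟨0, by omega⟩ := hI
  obtain ⟨hsocle, hfree⟩ := stmt_9_general (R := ℂ) (⟨0, by omega⟩ : Fin r)
  exact ⟨hsocle, fun h ↦ one_ne_zero ((hfree 1).1 (by rw [h, smul_zero]))⟩
end

section
/- Let r ≥ 1 and m_1, …, m_r ≥ 1 be integers with n = m_1 + ⋯ + m_r ≥ 3. Let P be the polynomial ring over ℂ in the n variables z^{(i)}_a (1 ≤ i ≤ r, 1 ≤ a ≤ m_i), and let I be the ideal of P generated by: (a) for each i with m_i ≥ 2, the 2×2 minors z^{(i)}_a σ_i(b) − z^{(i)}_b σ_i(a) for 1 ≤ a < b ≤ m_i, where σ_i(a) = z^{(i)}_{a+1} for a < m_i and σ_i(m_i) = (z^{(i)}_1)²; and (b) the products z^{(k)}_a z^{(l)}_b for all k ≠ l. Set B = P/I. Let d̄ : I/I² → B ⊗_P Ω_{P/ℂ} be the B-linear map induced by the universal derivation d : P → Ω_{P/ℂ}, and let T¹ be the cokernel of the B-linear map Hom_B(B ⊗_P Ω_{P/ℂ}, B) → Hom_B(I/I², B) given by precomposition with d̄. Then dim_ℂ T¹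 = n(n−1) − r. -/
set_option synthInstance.maxHeartbeats 1000000

open TensorProduct

/-!
On the branch `i` the curve is parametrized by `z_a = t ^ (m i + a)`, `0 ≤ a < m i`, so a function
on the curve is a family of polynomials `c + t ^ m i * h i` with a common constant `c`. Hence a
homomorphism `I → B` is a family of homomorphisms `ψ i` from `I` to `K[t]`, one for each branch,
whose values glue. Each `ψ i` is determined by coordinates indexed by the variables, and these can
be prescribed freely, except that the coordinate of the first variable of the branch is zero: after
multiplication by `t ^ (2 * m i)` they are those of a vector field.

For `n ≥ 3` the syzygies of `I` force the values of `ψ i` to be divisible by `t ^ m i`, and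
divisible families glue. So the deformations are the families `t ^ m i • ψ' i` with arbitrary
`ψ' i`. The vector fields with components divisible by `t ^ m i` produce those for which every
coordinate of `ψ' i` vanishes to a certain order; the orders add up to `n * m i - 1` on the branch
`i`, hence to `n ^ 2 - r` in total. What is left of the trivial deformations are the translations
of affine space, which for `n ≥ 3` contribute `n` independent classes.
-/

namespace RationalPartitionCurve

section LinearAlgebra

theorem finrank_quotient_eq_sub_of_map_eq_range {F V W U : Type*} [DivisionRing F]
    [AddCommGroup V] [Module F V] [AddCommGroup W] [Module F W] [FiniteDimensional F W]
    [AddCommGroup U] [Module F U] {R : Submodule F V} {Φ : V →ₗ[F] W} {κ : U →ₗ[F] W}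
    (hΦ : Function.Surjective Φ) (hker : LinearMap.ker Φ ≤ R)
    (hmap : R.map Φ = LinearMap.range κ) (hκ : Function.Injective κ) :
    Module.finrank F (V ⧸ R) = Module.finrank F W - Module.finrank F U := by
  have hcomp : Function.Surjective ((R.map Φ).mkQ ∘ₗ Φ) :=
    (Submodule.mkQ_surjective _).comp hΦ
  have hR : LinearMap.ker ((R.map Φ).mkQ ∘ₗ Φ) = R := by
    rw [LinearMap.ker_comp, Submodule.ker_mkQ, Submodule.comap_map_eq, sup_eq_left.2 hker]
  rw [((Submodule.quotEquivOfEq _ _ hR).symm.trans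
      (LinearMap.quotKerEquivOfSurjective _ hcomp)).finrank_eq,
    Submodule.finrank_quotient, hmap, LinearMap.finrank_range_of_inj hκ]

theorem exists_eq_smul_of_forall_dvd {R S M : Type*} [Semiring R] [CommSemiring S]
    [AddCommMonoid M] [Module R M] {τ : R →+* S} {c : S} (hc : IsLeftRegular c)
    (ψ : M →ₛₗ[τ] S) (hdvd : ∀ x, c ∣ ψ x) : ∃ ψ' : M →ₛₗ[τ] S, ψ = c • ψ' := by
  choose q hq using hdvd
  refine ⟨{ toFun := q, map_add' := fun x y => hc ?_, map_smul' := fun a x => hc ?_ },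
    LinearMap.ext hq⟩
  · simp only [mul_add, ← hq, map_add]
  · change c * q (a • x) = c * (τ a * q x)
    rw [mul_left_comm, ← hq, ← hq, map_smulₛₗ, smul_eq_mul]

end LinearAlgebra

section Conormal

variable {R σ : Type*} [CommRing R] [Fintype σ] {I : Ideal (MvPolynomial σ R)}

theorem one_tmul_D_eq_sum (f : MvPolynomial σ R) :
    (1 : MvPolynomial σ R ⧸ I) ⊗ₜ[MvPolynomial σ R] KaehlerDifferential.D R (MvPolynomial σ R) f =
      ∑ x, Ideal.Quotient.mk I (MvPolynomial.pderiv x f) • (1 : MvPolynomial σ R ⧸ I)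
        ⊗ₜ[MvPolynomial σ R] KaehlerDifferential.D R (MvPolynomial σ R) (MvPolynomial.X x) := by
  have hD := (KaehlerDifferential.mvPolynomialBasis R σ).sum_repr (KaehlerDifferential.D R _ f)
  simp only [KaehlerDifferential.mvPolynomialBasis_repr_apply,
    KaehlerDifferential.mvPolynomialBasis_apply] at hD
  rw [← hD, TensorProduct.tmul_sum]
  exact Finset.sum_congr rfl fun x _ => by rw [TensorProduct.tmul_smul]; rfl

theorem mem_range_dualMap_iff
    {dbar : I.Cotangent →ₗ[MvPolynomial σ R ⧸ I]
      (MvPolynomial σ R ⧸ I) ⊗[MvPolynomial σ R] KaehlerDifferential R (MvPolynomial σ R)}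
    (hdbar : ∀ f : I, dbar (I.toCotangent f) =
      1 ⊗ₜ[MvPolynomial σ R] KaehlerDifferential.D R (MvPolynomial σ R) f.1)
    (φ : Module.Dual (MvPolynomial σ R ⧸ I) I.Cotangent) :
    φ ∈ LinearMap.range dbar.dualMap ↔ ∃ v : σ → MvPolynomial σ R ⧸ I, ∀ f : I,
      φ (I.toCotangent f) = ∑ x, v x * Ideal.Quotient.mk I (MvPolynomial.pderiv x f.1) := by
  have hdual (l) (f : I) : dbar.dualMap l (I.toCotangent f) =
      ∑ x, l (1 ⊗ₜ KaehlerDifferential.D R _ (MvPolynomial.X x)) *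
        Ideal.Quotient.mk I (MvPolynomial.pderiv x f.1) := by
    rw [LinearMap.dualMap_apply, hdbar, one_tmul_D_eq_sum, map_sum]
    exact Finset.sum_congr rfl fun x _ => by rw [map_smul, smul_eq_mul, mul_comm]
  constructor
  · rintro ⟨l, rfl⟩
    exact ⟨_, hdual l⟩
  · rintro ⟨v, hv⟩
    let b := Algebra.TensorProduct.basis (MvPolynomial σ R ⧸ I)
      (KaehlerDifferential.mvPolynomialBasis R σ)
    have hb (x : σ) : b.constr (MvPolynomial σ R ⧸ I) v
        (1 ⊗ₜ KaehlerDifferential.D R _ (MvPolynomial.X x)) = v x := by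
      rw [← KaehlerDifferential.mvPolynomialBasis_apply, ← Algebra.TensorProduct.basis_apply,
        Module.Basis.constr_basis]
    refine ⟨b.constr (MvPolynomial σ R ⧸ I) v, LinearMap.ext fun y => ?_⟩
    obtain ⟨f, rfl⟩ := I.toCotangent_surjective y
    simp only [hdual, hb, hv]

end Conormal

open scoped Polynomial
open Polynomial (X C)

variable {ι K : Type*} {m : ι → ℕ}

/-- The index set of the variables `z^{(i)}_a`, with `a` counted from `0`. -/
abbrev Var (m : ι → ℕ) := (i : ι) × Fin (m i)

section Curve

variable [∀ i, NeZero (m i)]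

/-- The variable of the branch `i` whose index is `a` modulo `m i`. -/
def branchVar (i : ι) (a : ℕ) : Var m := ⟨i, Fin.ofNat (m i) a⟩

@[simp]
theorem branchVar_val (i : ι) (a : Fin (m i)) : (branchVar i a : Var m) = ⟨i, a⟩ := by
  simp [branchVar]

variable [CommRing K]

/-- The variables of the branch `i`, continued to all indices by `z_{a + m} = z_0 z_a`. Then
`z_m = z_0²`, so that the matrix of the branch has the columns `(z_a, z_{a+1})`, and `z_a` is
`t ^ (m + a)` on the branch for every `a`. -/
noncomputable def z (i : ι) (a : ℕ) : MvPolynomial (Var m) K :=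
  MvPolynomial.X (branchVar i 0) ^ (a / m i) * MvPolynomial.X (branchVar i a)

theorem z_of_lt {i : ι} {a : ℕ} (ha : a < m i) :
    (z i a : MvPolynomial (Var m) K) = MvPolynomial.X (branchVar i a) := by
  rw [z, Nat.div_eq_of_lt ha, pow_zero, one_mul]

theorem z_val (i : ι) (a : Fin (m i)) :
    (z i a : MvPolynomial (Var m) K) = MvPolynomial.X ⟨i, a⟩ := by
  rw [z_of_lt a.isLt, branchVar_val]

theorem z_add_mul (i : ι) (a q : ℕ) :
    (z i (a + m i * q) : MvPolynomial (Var m) K) = z i 0 ^ q * z i a := by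
  have hm : 0 < m i := Nat.pos_of_neZero _
  have hvar : (branchVar i (a + m i * q) : Var m) = branchVar i a := by
    simp [branchVar, Fin.ofNat]
  rw [z_of_lt hm, z, z, hvar, Nat.add_mul_div_left _ _ hm, pow_add]
  ring

theorem z_self (i : ι) :
    (z i (m i) : MvPolynomial (Var m) K) = MvPolynomial.X (branchVar i 0) ^ 2 := by
  have hz := z_add_mul (K := K) (m := m) i 0 1
  rw [zero_add, mul_one, pow_one, ← sq, z_of_lt (Nat.pos_of_neZero (m i))] at hz
  exact hz

theorem exists_z_eq_pow_mul_z (i : ι) (a : ℕ) : ∃ (q : ℕ) (c : Fin (m i)),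
    (z i a : MvPolynomial (Var m) K) = z i 0 ^ q * z i c ∧
      (z i (a + 1) : MvPolynomial (Var m) K) = z i 0 ^ q * z i (c + 1) := by
  refine ⟨a / m i, Fin.ofNat (m i) a, ?_, ?_⟩ <;> rw [← z_add_mul, Fin.val_ofNat]
  · rw [Nat.mod_add_div]
  · rw [add_right_comm, Nat.mod_add_div]

/-- The 2×2 minor of the matrix of the branch `i` on its columns `a` and `b`. -/
noncomputable def minor (i : ι) (a b : ℕ) : MvPolynomial (Var m) K :=
  z i a * z i (b + 1) - z i b * z i (a + 1)

variable (K m) in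
/-- The ideal of the rational partition curve. -/
noncomputable def curveIdeal : Ideal (MvPolynomial (Var m) K) :=
  Ideal.span ({p | ∃ (i : ι) (a b : Fin (m i)), a < b ∧ p = minor i a b} ∪
    {p | ∃ (k l : ι) (a : Fin (m k)) (b : Fin (m l)), k ≠ l ∧ p = z k a * z l b})

theorem minor_mem_curveIdeal (i : ι) (a b : ℕ) : minor i a b ∈ curveIdeal K m := by
  have hfin (a b : Fin (m i)) : minor i a b ∈ curveIdeal K m := by
    rcases lt_trichotomy a b with hab | rfl | hab
    · exact Ideal.subset_span (Or.inl ⟨i, a, b, hab, rfl⟩)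
    · simp [minor]
    · rw [show (minor i a b : MvPolynomial (Var m) K) = -minor i b a by simp only [minor]; ring]
      exact neg_mem (Ideal.subset_span (Or.inl ⟨i, b, a, hab, rfl⟩))
  obtain ⟨q, a', ha, ha'⟩ := exists_z_eq_pow_mul_z (K := K) (m := m) i a
  obtain ⟨s, b', hb, hb'⟩ := exists_z_eq_pow_mul_z (K := K) (m := m) i b
  have hminor : (minor i a b : MvPolynomial (Var m) K) = z i 0 ^ q * z i 0 ^ s * minor i a' b' := by
    simp only [minor, ha, ha', hb, hb']
    ring
  exact hminor ▸ Ideal.mul_mem_left _ _ (hfin a' b')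

theorem z_mul_z_mem_curveIdeal {k l : ι} (hkl : k ≠ l) (a b : ℕ) :
    z k a * z l b ∈ curveIdeal K m := by
  obtain ⟨q, a', ha, -⟩ := exists_z_eq_pow_mul_z (K := K) (m := m) k a
  obtain ⟨s, b', hb, -⟩ := exists_z_eq_pow_mul_z (K := K) (m := m) l b
  rw [ha, hb, mul_mul_mul_comm]
  exact Ideal.mul_mem_left _ _ (Ideal.subset_span (Or.inr ⟨k, l, a', b', hkl, rfl⟩))

theorem z_mul_z_sub_mem_curveIdeal (i : ι) (a b : ℕ) :
    z i a * z i b - z i (m i + a + b) ∈ curveIdeal K m := by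
  induction a generalizing b with
  | zero =>
    have hz := z_add_mul (K := K) (m := m) i b 1
    rw [mul_one, pow_one, add_comm b] at hz
    rw [add_zero, hz, sub_self]
    exact zero_mem _
  | succ a ih =>
    have hstep : (z i (a + 1) * z i b - z i (m i + (a + 1) + b) : MvPolynomial (Var m) K) =
        (z i a * z i (b + 1) - z i (m i + a + (b + 1))) - minor i a b := by
      rw [minor, show m i + (a + 1) + b = m i + a + (b + 1) by ring]
      ring
    exact hstep ▸ sub_mem (ih (b + 1)) (minor_mem_curveIdeal i a b)

/-- The element `minor i a b` of the ideal of the curve. -/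
noncomputable def minorRel (i : ι) (a b : ℕ) : curveIdeal K m :=
  ⟨minor i a b, minor_mem_curveIdeal i a b⟩

/-- The element `z_a^{(k)} z_b^{(l)}` of the ideal of the curve. -/
noncomputable def crossRel {k l : ι} (hkl : k ≠ l) (a b : ℕ) : curveIdeal K m :=
  ⟨z k a * z l b, z_mul_z_mem_curveIdeal hkl a b⟩

theorem crossRel_comm {k l : ι} (hkl : k ≠ l) (a b : ℕ) :
    (crossRel hkl a b : curveIdeal K m) = crossRel hkl.symm b a :=
  Subtype.ext (mul_comm _ _)

theorem eq_top_of_forall_rel_mem (N : Submodule (MvPolynomial (Var m) K) (curveIdeal K m))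
    (hminor : ∀ (i : ι) (a b : Fin (m i)), a < b → minorRel i a b ∈ N)
    (hcross : ∀ (k l : ι) (hkl : k ≠ l) (a : Fin (m k)) (b : Fin (m l)), crossRel hkl a b ∈ N) :
    N = ⊤ := by
  have hle : curveIdeal K m ≤ N.map (curveIdeal K m).subtype := by
    refine Submodule.span_le.2 ?_
    rintro _ (⟨i, a, b, hab, rfl⟩ | ⟨k, l, a, b, hkl, rfl⟩)
    · exact ⟨_, hminor i a b hab, rfl⟩
    · exact ⟨_, hcross k l hkl a b, rfl⟩
  refine Submodule.eq_top_iff'.2 fun f => ?_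
  obtain ⟨g, hg, hgf⟩ := hle f.2
  exact Subtype.ext hgf ▸ hg

end Curve


section BranchEval

variable [DecidableEq ι] [CommRing K]

variable (K m) in
/-- Evaluation of polynomials on the branch `i`, parametrized by `z_a = t ^ (m i + a)`. -/
noncomputable def branchEval (i : ι) : MvPolynomial (Var m) K →ₐ[K] K[X] :=
  MvPolynomial.aeval fun x => if x.1 = i then X ^ (m i + x.2) else 0

variable [∀ i, NeZero (m i)]

@[simp]
theorem branchEval_z (i : ι) (a : ℕ) : branchEval K m i (z i a) = X ^ (m i + a) := by
  have hdiv : m i * (a / m i) + (m i + a % m i) = m i + a := by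
    have := Nat.div_add_mod a (m i)
    omega
  simp [branchEval, z, branchVar, ← pow_mul, ← pow_add, hdiv]

theorem branchEval_z_of_ne {i k : ι} (hki : k ≠ i) (a : ℕ) : branchEval K m i (z k a) = 0 := by
  simp [branchEval, z, branchVar, hki]

theorem branchEval_minor (i k : ι) (a b : ℕ) : branchEval K m i (minor k a b) = 0 := by
  rcases eq_or_ne k i with rfl | hki
  · simp only [minor, map_sub, map_mul, branchEval_z]
    ring
  · simp [minor, branchEval_z_of_ne hki]

theorem branchEval_eq_zero_of_mem (i : ι) {f : MvPolynomial (Var m) K} (hf : f ∈ curveIdeal K m) :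
    branchEval K m i f = 0 := by
  have hle : curveIdeal K m ≤ RingHom.ker (branchEval K m i) := by
    refine Ideal.span_le.2 ?_
    rintro _ (⟨k, a, b, -, rfl⟩ | ⟨k, l, a, b, hkl, rfl⟩)
    · exact branchEval_minor i k a b
    · rw [SetLike.mem_coe, RingHom.mem_ker, map_mul]
      rcases eq_or_ne k i with rfl | hki
      · rw [branchEval_z_of_ne hkl.symm, mul_zero]
      · rw [branchEval_z_of_ne hki, zero_mul]
  exact hle hf

end BranchEval

section NormalForm

variable [∀ i, NeZero (m i)] [CommRing K]

/-- The linear map sending `t ^ d` to `z_d`, a section up to the factor `t ^ m i` of the evaluation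
on the branch `i`. -/
noncomputable def branchSection (i : ι) : K[X] →ₗ[K] MvPolynomial (Var m) K :=
  (Polynomial.basisMonomials K).constr K fun d => z i d

@[simp]
theorem branchSection_monomial (i : ι) (d : ℕ) (c : K) :
    (branchSection i (Polynomial.monomial d c) : MvPolynomial (Var m) K) = c • z i d := by
  have hmon : Polynomial.monomial d c = c • Polynomial.basisMonomials K d := by
    simp [Polynomial.smul_monomial]
  rw [hmon, map_smul, branchSection, Module.Basis.constr_basis]

theorem branchSection_mul_z_sub_mem (i : ι) (a : ℕ) (h : K[X]) :
    branchSection i h * z i a - branchSection i (X ^ (m i + a) * h) ∈ curveIdeal K m := by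
  induction h using Polynomial.induction_on' with
  | add p q hp hq =>
    rw [mul_add, map_add, map_add, add_mul, add_sub_add_comm]
    exact add_mem hp hq
  | monomial d c =>
    rw [Polynomial.X_pow_mul_monomial, branchSection_monomial, branchSection_monomial,
      smul_mul_assoc, ← smul_sub, mul_comm, add_comm d]
    exact Submodule.smul_of_tower_mem _ c (z_mul_z_sub_mem_curveIdeal i a d)

theorem branchSection_mul_z_mem {i k : ι} (hik : i ≠ k) (a : ℕ) (h : K[X]) :
    branchSection i h * z k a ∈ curveIdeal K m := by
  induction h using Polynomial.induction_on' with
  | add p q hp hq =>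
    rw [map_add, add_mul]
    exact add_mem hp hq
  | monomial d c =>
    rw [branchSection_monomial, smul_mul_assoc]
    exact Submodule.smul_of_tower_mem _ c (z_mul_z_mem_curveIdeal hik d a)

theorem branchEval_branchSection [DecidableEq ι] (i : ι) (h : K[X]) :
    branchEval K m i (branchSection i h) = X ^ m i * h := by
  induction h using Polynomial.induction_on' with
  | add p q hp hq => rw [map_add, map_add, hp, hq, mul_add]
  | monomial d c =>
    rw [branchSection_monomial, map_smul, branchEval_z, ← Polynomial.C_mul_X_pow_eq_monomial,
      Polynomial.smul_eq_C_mul, pow_add]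
    ring

theorem branchEval_branchSection_of_ne [DecidableEq ι] {i k : ι} (hki : k ≠ i) (h : K[X]) :
    branchEval K m i (branchSection k h) = 0 := by
  induction h using Polynomial.induction_on' with
  | add p q hp hq => rw [map_add, map_add, hp, hq, add_zero]
  | monomial d c => rw [branchSection_monomial, map_smul, branchEval_z_of_ne hki, smul_zero]

variable [Fintype ι]

/-- The representative modulo the ideal of the curve of the function which is `c + t ^ m i * h i`
on the branch `i`. -/
noncomputable def normalForm (c : K) (h : ι → K[X]) : MvPolynomial (Var m) K :=
  MvPolynomial.C c + ∑ i, branchSection i (h i)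

theorem normalForm_mul_z_sub_mem [DecidableEq ι] (c : K) (h : ι → K[X]) (k : ι) (a : ℕ) :
    normalForm c h * z k a - normalForm 0 (Pi.single k (C c * X ^ a + X ^ (m k + a) * h k)) ∈
      curveIdeal K m := by
  have hsingle (g : K[X]) :
      (normalForm 0 (Pi.single k g) : MvPolynomial (Var m) K) = branchSection k g := by
    rw [normalForm, map_zero, zero_add, Finset.sum_eq_single k, Pi.single_eq_same]
    · exact fun i _ hik => by rw [Pi.single_eq_of_ne hik, map_zero]
    · exact fun hk => absurd (Finset.mem_univ k) hk
  have hmul : (normalForm c h * z k a -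
        normalForm 0 (Pi.single k (C c * X ^ a + X ^ (m k + a) * h k)) : MvPolynomial (Var m) K) =
      (branchSection k (h k) * z k a - branchSection k (X ^ (m k + a) * h k)) +
        ∑ i ∈ Finset.univ.erase k, branchSection i (h i) * z k a := by
    rw [hsingle, normalForm, map_add, Polynomial.C_mul_X_pow_eq_monomial, branchSection_monomial,
      MvPolynomial.smul_eq_C_mul, ← Finset.add_sum_erase _ _ (Finset.mem_univ k),
      ← Finset.sum_mul]
    ring
  rw [hmul]
  exact add_mem (branchSection_mul_z_sub_mem k a _) (Ideal.sum_mem _ fun i hi =>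
    branchSection_mul_z_mem (Finset.ne_of_mem_erase hi) a _)

theorem exists_sub_normalForm_mem (p : MvPolynomial (Var m) K) :
    ∃ c h, p - normalForm c h ∈ curveIdeal K m := by
  classical
  induction p using MvPolynomial.induction_on with
  | C a => exact ⟨a, 0, by simp [normalForm]⟩
  | add p q hp hq =>
    obtain ⟨c, h, hp⟩ := hp
    obtain ⟨c', h', hq⟩ := hq
    refine ⟨c + c', h + h', ?_⟩
    have hadd : (normalForm (c + c') (h + h') : MvPolynomial (Var m) K) =
        normalForm c h + normalForm c' h' := by
      simp only [normalForm, Pi.add_apply, map_add, Finset.sum_add_distrib]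
      ring
    rw [hadd, add_sub_add_comm]
    exact add_mem hp hq
  | mul_X p x hp =>
    obtain ⟨c, h, hp⟩ := hp
    refine ⟨0, Pi.single x.1 (C c * X ^ (x.2 : ℕ) + X ^ (m x.1 + x.2) * h x.1), ?_⟩
    rw [← z_val x.1 x.2, ← sub_add_sub_cancel _ (normalForm c h * z x.1 x.2), ← sub_mul]
    exact add_mem (Ideal.mul_mem_right _ _ hp) (normalForm_mul_z_sub_mem c h x.1 x.2)

theorem branchEval_normalForm [DecidableEq ι] (i : ι) (c : K) (h : ι → K[X]) :
    branchEval K m i (normalForm c h) = C c + X ^ m i * h i := by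
  have hC : branchEval K m i (MvPolynomial.C c) = C c := (branchEval K m i).commutes c
  rw [normalForm, map_add, map_sum, hC, Finset.sum_eq_single i, branchEval_branchSection]
  · exact fun k _ hki => branchEval_branchSection_of_ne hki _
  · exact fun hi => absurd (Finset.mem_univ i) hi

end NormalForm

section FunctionRing

variable [CommRing K]

theorem mem_curveIdeal_iff [∀ i, NeZero (m i)] [Finite ι] [Nonempty ι] [DecidableEq ι]
    {p : MvPolynomial (Var m) K} :
    p ∈ curveIdeal K m ↔ ∀ i, branchEval K m i p = 0 := by
  have := Fintype.ofFinite ι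
  refine ⟨fun hp i => branchEval_eq_zero_of_mem i hp, fun hp => ?_⟩
  obtain ⟨c, h, hmem⟩ := exists_sub_normalForm_mem p
  have hch (i : ι) : C c + X ^ m i * h i = 0 := by
    have heval := branchEval_eq_zero_of_mem i hmem
    rwa [map_sub, hp, zero_sub, neg_eq_zero, branchEval_normalForm] at heval
  have hc : c = 0 := by
    obtain ⟨i⟩ := ‹Nonempty ι›
    simpa [Polynomial.coeff_X_pow_mul', (NeZero.ne (m i)).symm] using
      congrArg (Polynomial.coeff · 0) (hch i)
  have hh : h = 0 := funext fun i => by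
    refine (Polynomial.isRegular_X_pow (m i)).left ?_
    simpa [hc] using hch i
  simpa [hc, hh, normalForm] using hmem

variable (m) in
/-- The functions `g i` on the branches glue to a function on the curve: they have a common value
at the singular point and no terms of degree strictly between `0` and `m i`. -/
def Glues (g : ι → K[X]) : Prop :=
  ∃ c, ∀ i, X ^ m i ∣ g i - C c

theorem exists_branchEval_eq_iff [∀ i, NeZero (m i)] [Finite ι] [DecidableEq ι] {g : ι → K[X]} :
    (∃ p, ∀ i, branchEval K m i p = g i) ↔ Glues m g := by
  have := Fintype.ofFinite ι
  constructor
  · rintro ⟨p, hp⟩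
    obtain ⟨c, h, hmem⟩ := exists_sub_normalForm_mem p
    refine ⟨c, fun i => ⟨h i, ?_⟩⟩
    have heval := branchEval_eq_zero_of_mem i hmem
    rw [map_sub, hp, branchEval_normalForm] at heval
    linear_combination heval
  · rintro ⟨c, hc⟩
    choose h hh using hc
    exact ⟨normalForm c h, fun i => by rw [branchEval_normalForm, ← hh, add_sub_cancel]⟩

theorem glues_of_forall_dvd {g : ι → K[X]} (hg : ∀ i, X ^ m i ∣ g i) : Glues m g :=
  ⟨0, by simpa using hg⟩

theorem Glues.coeff_eq_zero {g : ι → K[X]} (hg : Glues m g) {i : ι} {d : ℕ} (hd : 0 < d)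
    (hdm : d < m i) : (g i).coeff d = 0 := by
  obtain ⟨c, hc⟩ := hg
  simpa [Polynomial.coeff_C_of_ne_zero hd.ne'] using Polynomial.X_pow_dvd_iff.1 (hc i) d hdm

theorem Glues.coeff_pow_mul_eq_zero {g : ι → K[X]} (hg : Glues m g) {i : ι} {a c : ℕ}
    (hac : a ≠ c) (hc : c < m i) : (X ^ a * g i).coeff c = 0 := by
  rw [Polynomial.coeff_X_pow_mul']
  split_ifs
  · exact hg.coeff_eq_zero (by omega) (by omega)
  · rfl

theorem Glues.pow_dvd [∀ i, NeZero (m i)] {g : ι → K[X]} (hg : Glues m g) {i : ι}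
    (hi : (g i).coeff 0 = 0) (k : ι) : X ^ m k ∣ g k := by
  obtain ⟨c, hc⟩ := hg
  have hc0 : c = 0 := by
    simpa [hi] using Polynomial.X_pow_dvd_iff.1 (hc i) 0 (Nat.pos_of_neZero _)
  simpa [hc0] using hc k

end FunctionRing

section BranchHom

variable [∀ i, NeZero (m i)] [DecidableEq ι] [CommRing K]

variable (K m) in
/-- The linear maps from the ideal of the curve to the functions on the normalization `K[t]` of the
branch `i`; semilinearity over `branchEval` spares a module structure on `K[t]`. -/
abbrev BranchHom (i : ι) :=
  curveIdeal K m →ₛₗ[(branchEval K m i : MvPolynomial (Var m) K →+* K[X])] K[X]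

section Relations

variable {i : ι} (ψ : BranchHom K m i)

theorem map_smul_branchHom (g : MvPolynomial (Var m) K) (f : curveIdeal K m) :
    ψ (g • f) = branchEval K m i g * ψ f :=
  map_smulₛₗ ψ g f

theorem pow_mul_map_minorRel (a b c : ℕ) : X ^ c * ψ (minorRel i a b) =
    X ^ a * ψ (minorRel i c b) - X ^ b * ψ (minorRel i c a) := by
  have hrel : (z i c : MvPolynomial (Var m) K) • (minorRel i a b : curveIdeal K m) =
      (z i a : MvPolynomial (Var m) K) • minorRel i c b -
        (z i b : MvPolynomial (Var m) K) • minorRel i c a := by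
    refine Subtype.ext ?_
    simp only [minorRel, minor, Submodule.coe_sub, Submodule.coe_smul, smul_eq_mul]
    ring
  have hψ := congrArg ψ hrel
  simp only [map_sub, map_smul_branchHom, branchEval_z] at hψ
  refine (Polynomial.isRegular_X_pow (m i)).left ?_
  linear_combination hψ

theorem map_minorRel_of_ne {k : ι} (hki : k ≠ i) (a b : ℕ) : ψ (minorRel k a b) = 0 := by
  have hrel : (z i 0 : MvPolynomial (Var m) K) • (minorRel k a b : curveIdeal K m) =
      (z k a : MvPolynomial (Var m) K) • crossRel hki (b + 1) 0 -
        (z k b : MvPolynomial (Var m) K) • crossRel hki (a + 1) 0 := by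
    refine Subtype.ext ?_
    simp only [minorRel, minor, crossRel, Submodule.coe_sub, Submodule.coe_smul, smul_eq_mul]
    ring
  have hψ := congrArg ψ hrel
  simp only [map_sub, map_smul_branchHom, branchEval_z, branchEval_z_of_ne hki] at hψ
  refine (Polynomial.isRegular_X_pow (m i + 0)).left ?_
  linear_combination hψ

theorem map_crossRel_of_ne {k l : ι} (hki : k ≠ i) (hli : l ≠ i) (hkl : k ≠ l) (a b : ℕ) :
    ψ (crossRel hkl a b) = 0 := by
  have hrel : (z i 0 : MvPolynomial (Var m) K) • (crossRel hkl a b : curveIdeal K m) =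
      (z k a : MvPolynomial (Var m) K) • crossRel hli b 0 := by
    refine Subtype.ext ?_
    simp only [crossRel, Submodule.coe_smul, smul_eq_mul]
    ring
  have hψ := congrArg ψ hrel
  simp only [map_smul_branchHom, branchEval_z, branchEval_z_of_ne hki] at hψ
  refine (Polynomial.isRegular_X_pow (m i + 0)).left ?_
  linear_combination hψ

theorem map_crossRel_eq_pow_mul {k : ι} (hki : k ≠ i) (a b : ℕ) :
    ψ (crossRel hki a b) = X ^ b * ψ (crossRel hki a 0) := by
  have hrel : (z i 0 : MvPolynomial (Var m) K) • (crossRel hki a b : curveIdeal K m) =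
      (z i b : MvPolynomial (Var m) K) • crossRel hki a 0 := by
    refine Subtype.ext ?_
    simp only [crossRel, Submodule.coe_smul, smul_eq_mul]
    ring
  have hψ := congrArg ψ hrel
  simp only [map_smul_branchHom, branchEval_z] at hψ
  refine (Polynomial.isRegular_X_pow (m i + 0)).left ?_
  linear_combination hψ

end Relations

/-- The coordinates of a homomorphism `ψ`. On the branch itself, `ψ (minorRel i 0 b)` is recovered
as `coord b - t * coord (b - 1)`; the coordinates are summed so that the vector field with given
coordinates has a simple formula. -/
noncomputable def coord (i : ι) (x : Var m) : BranchHom K m i →ₗ[K[X]] K[X] where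
  toFun ψ := if h : x.1 = i then
      ∑ b ∈ Finset.range (x.2 + 1), X ^ (x.2 - b : ℕ) * ψ (minorRel x.1 0 b)
    else ψ (crossRel h x.2 0)
  map_add' ψ ψ' := by
    split_ifs
    · simp only [LinearMap.add_apply, mul_add, Finset.sum_add_distrib]
    · rfl
  map_smul' c ψ := by
    split_ifs
    · simp only [LinearMap.smul_apply, smul_eq_mul, mul_left_comm, Finset.mul_sum,
        RingHom.id_apply]
    · rfl

theorem coord_self {i : ι} (a : Fin (m i)) (ψ : BranchHom K m i) : coord i ⟨i, a⟩ ψ =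
    ∑ b ∈ Finset.range (a + 1), X ^ (a - b : ℕ) * ψ (minorRel i 0 b) :=
  dif_pos rfl

theorem coord_of_ne {i k : ι} (hki : k ≠ i) (a : Fin (m k)) (ψ : BranchHom K m i) :
    coord i ⟨k, a⟩ ψ = ψ (crossRel hki a 0) :=
  dif_neg hki

theorem coord_branchVar_zero (i : ι) (ψ : BranchHom K m i) : coord i (branchVar i 0) ψ = 0 := by
  have hzero : (minorRel i 0 0 : curveIdeal K m) = 0 := Subtype.ext (sub_self _)
  simp [branchVar, coord_self, hzero]

theorem dvd_of_forall_dvd_coord {i : ι} {ψ : BranchHom K m i} {p : K[X]}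
    (hψ : ∀ x, p ∣ coord i x ψ) (f : curveIdeal K m) : p ∣ ψ f := by
  have hown (b : ℕ) (hb : b < m i) : p ∣ ψ (minorRel i 0 b) := by
    induction b using Nat.strong_induction_on with
    | _ b ih =>
      have hsum := hψ ⟨i, ⟨b, hb⟩⟩
      rw [coord_self, Finset.sum_range_succ, Nat.sub_self, pow_zero, one_mul] at hsum
      refine (dvd_add_right (Finset.dvd_sum fun c hc => ?_)).1 hsum
      have hcb := Finset.mem_range.1 hc
      exact (ih c hcb (hcb.trans hb)).mul_left _
  have hoff {k : ι} (hki : k ≠ i) (a : Fin (m k)) (b : ℕ) : p ∣ ψ (crossRel hki a b) := by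
    rw [map_crossRel_eq_pow_mul, ← coord_of_ne hki a]
    exact (hψ _).mul_left _
  have htop : Submodule.comap ψ (Ideal.span {p}) = (⊤ : Submodule (MvPolynomial (Var m) K) _) := by
    refine eq_top_of_forall_rel_mem _ (fun k a b _ => Ideal.mem_span_singleton.2 ?_)
      fun k l hkl a b => Ideal.mem_span_singleton.2 ?_
    · rcases eq_or_ne k i with rfl | hki
      · have hrel := pow_mul_map_minorRel ψ a b 0
        rw [pow_zero, one_mul] at hrel
        exact hrel ▸ dvd_sub ((hown b b.isLt).mul_left _) ((hown a a.isLt).mul_left _)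
      · exact map_minorRel_of_ne ψ hki a b ▸ dvd_zero p
    · rcases eq_or_ne l i with rfl | hli
      · exact hoff hkl a b
      rcases eq_or_ne k i with rfl | hki
      · exact crossRel_comm (K := K) (m := m) hkl a b ▸ hoff hli b a
      · exact map_crossRel_of_ne ψ hki hli hkl a b ▸ dvd_zero p
  exact Ideal.mem_span_singleton.1 (Submodule.eq_top_iff'.1 htop f)

theorem branchHom_ext {i : ι} {ψ ψ' : BranchHom K m i} (hψ : ∀ x, coord i x ψ = coord i x ψ') :
    ψ = ψ' := by
  refine LinearMap.ext fun f => sub_eq_zero.1 (zero_dvd_iff.1 ?_)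
  exact dvd_of_forall_dvd_coord (ψ := ψ - ψ') (fun x => by rw [map_sub, hψ, sub_self]) f

end BranchHom

section BranchDeriv

variable [DecidableEq ι] [Fintype ι] [CommRing K]

/-- The derivative, on the branch `i`, along the vector field with the components `W`. -/
noncomputable def branchDeriv (i : ι) (W : Var m → K[X]) : MvPolynomial (Var m) K →ₗ[K] K[X] :=
  ∑ x, LinearMap.mulLeft K (W x) ∘ₗ (branchEval K m i).toLinearMap ∘ₗ
    (MvPolynomial.pderiv x).toLinearMap

theorem branchDeriv_apply (i : ι) (W : Var m → K[X]) (f : MvPolynomial (Var m) K) :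
    branchDeriv i W f = ∑ x, W x * branchEval K m i (MvPolynomial.pderiv x f) := by
  simp [branchDeriv]

theorem branchDeriv_mul (i : ι) (W : Var m → K[X]) (f g : MvPolynomial (Var m) K) :
    branchDeriv i W (f * g) =
      branchEval K m i f * branchDeriv i W g + branchEval K m i g * branchDeriv i W f := by
  simp only [branchDeriv_apply, Finset.mul_sum, ← Finset.sum_add_distrib]
  refine Finset.sum_congr rfl fun x _ => ?_
  rw [Derivation.leibniz, map_add, smul_eq_mul, smul_eq_mul, map_mul, map_mul]
  ring

theorem branchDeriv_X (i : ι) (W : Var m → K[X]) (x : Var m) :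
    branchDeriv i W (MvPolynomial.X x) = W x := by
  rw [branchDeriv_apply, Finset.sum_eq_single x]
  · simp
  · intro y _ hyx
    rw [MvPolynomial.pderiv_X_of_ne hyx.symm, map_zero, mul_zero]
  · exact fun hx => absurd (Finset.mem_univ x) hx

variable [∀ i, NeZero (m i)]

theorem branchDeriv_minor (i : ι) (W : Var m → K[X]) (a b : ℕ) :
    branchDeriv i W (minor i a b) = X ^ m i *
      (X ^ a * (branchDeriv i W (z i (b + 1)) - X * branchDeriv i W (z i b)) -
        X ^ b * (branchDeriv i W (z i (a + 1)) - X * branchDeriv i W (z i a))) := by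
  simp only [minor, map_sub, branchDeriv_mul, branchEval_z]
  ring

theorem branchDeriv_z_self (i : ι) (W : Var m → K[X]) :
    branchDeriv i W (z i (m i)) = 2 * X ^ m i * W (branchVar i 0) := by
  rw [z_self, sq, ← z_of_lt (Nat.pos_of_neZero (m i)), branchDeriv_mul, branchEval_z,
    z_of_lt (Nat.pos_of_neZero (m i)), branchDeriv_X]
  ring

/-- The homomorphism on the branch `i` which is induced by a vector field. -/
noncomputable def derivHom (i : ι) : (Var m → K[X]) →ₗ[K[X]] BranchHom K m i where
  toFun W :=
    { toFun f := branchDeriv i W f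
      map_add' f g := map_add _ (f : MvPolynomial (Var m) K) g
      map_smul' g f := by
        change branchDeriv i W (g * f) = _
        rw [branchDeriv_mul, branchEval_eq_zero_of_mem i f.2, zero_mul, add_zero]
        rfl }
  map_add' W W' := LinearMap.ext fun f => by
    simp [branchDeriv_apply, add_mul, Finset.sum_add_distrib]
  map_smul' c W := LinearMap.ext fun f => by
    simp [branchDeriv_apply, Finset.mul_sum, mul_assoc]

theorem derivHom_apply (i : ι) (W : Var m → K[X]) (f : curveIdeal K m) :
    derivHom i W f = branchDeriv i W f :=
  rfl

theorem coord_derivHom_self (i : ι) (W : Var m → K[X]) (a : Fin (m i)) :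
    coord i ⟨i, a⟩ (derivHom i W) = X ^ m i *
      (branchDeriv i W (z i (a + 1)) - X ^ (a + 1 : ℕ) * branchDeriv i W (z i 0) -
        ((a + 1 : ℕ) : K[X]) * X ^ (a : ℕ) *
          (branchDeriv i W (z i 1) - X * branchDeriv i W (z i 0))) := by
  rw [coord_self]
  generalize (a : ℕ) = n
  simp only [derivHom_apply, minorRel, branchDeriv_minor]
  induction n with
  | zero => simp
  | succ n ih =>
    have hshift (q : ℕ → K[X]) : ∑ b ∈ Finset.range (n + 1), X ^ (n + 1 - b) * q b =
        X * ∑ b ∈ Finset.range (n + 1), X ^ (n - b) * q b := by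
      rw [Finset.mul_sum]
      refine Finset.sum_congr rfl fun b hb => ?_
      rw [Nat.sub_add_comm (Nat.lt_succ_iff.1 (Finset.mem_range.1 hb)), pow_succ', mul_assoc]
    rw [Finset.sum_range_succ, hshift, ih, Nat.sub_self]
    push_cast
    ring

theorem coord_derivHom_of_ne {i k : ι} (hki : k ≠ i) (W : Var m → K[X]) (a : Fin (m k)) :
    coord i ⟨k, a⟩ (derivHom i W) = X ^ m i * W ⟨k, a⟩ := by
  rw [coord_of_ne hki, derivHom_apply, crossRel, branchDeriv_mul, branchEval_z,
    branchEval_z_of_ne hki, z_val, branchDeriv_X, zero_mul, zero_add, add_zero]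

end BranchDeriv

section CoordField

variable [∀ i, NeZero (m i)] [DecidableEq ι] [Field K]

/-- The vector field whose action on the ideal of the curve has the coordinates
`t ^ (2 * m i) * β`. -/
noncomputable def coordField (i : ι) (β : Var m → K[X]) (x : Var m) : K[X] :=
  if x.1 = i then
    X ^ m i * β (branchVar i (x.2 - 1)) - C ((x.2 : ℕ) / m i : K) * X ^ (x.2 : ℕ) *
      β (branchVar i (m i - 1))
  else X ^ m i * β x

/-- For `a = m i`, where `z_m = z_0²`, this holds because of the coefficient `a / m i`. -/
theorem branchDeriv_coordField_z [Fintype ι] {i : ι} (hmi : (m i : K) ≠ 0) {β : Var m → K[X]}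
    (hβ : β (branchVar i 0) = 0) {a : ℕ} (ha : a ≤ m i) :
    branchDeriv i (coordField i β) (z i a) = X ^ m i * β (branchVar i (a - 1)) -
      C (a / m i : K) * X ^ a * β (branchVar i (m i - 1)) := by
  have hlt {b : ℕ} (hb : b < m i) : coordField i β (branchVar i b) =
      X ^ m i * β (branchVar i (b - 1)) - C (b / m i : K) * X ^ b * β (branchVar i (m i - 1)) := by
    simp [coordField, branchVar, Nat.mod_eq_of_lt hb]
  rcases ha.lt_or_eq with ha | rfl
  · rw [z_of_lt ha, branchDeriv_X, hlt ha]
  · have hzero : coordField i β (branchVar i 0) = 0 := by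
      simp [hlt (Nat.pos_of_neZero (m i)), hβ]
    rw [branchDeriv_z_self, hzero, div_self hmi, map_one]
    ring

theorem coord_derivHom_coordField [Fintype ι] {i : ι} (hmi : (m i : K) ≠ 0) {β : Var m → K[X]}
    (hβ : β (branchVar i 0) = 0) (x : Var m) :
    coord i x (derivHom i (coordField i β)) = X ^ (2 * m i) * β x := by
  obtain ⟨k, a⟩ := x
  rcases eq_or_ne k i with rfl | hki
  · have hcast :
        C (((a + 1 : ℕ) : K) / m k) = ((a + 1 : ℕ) : K[X]) * C (((1 : ℕ) : K) / m k) := by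
      rw [← map_natCast (C : K →+* K[X]), ← map_mul, Nat.cast_one, mul_one_div]
    rw [coord_derivHom_self, branchDeriv_coordField_z hmi hβ a.isLt,
      branchDeriv_coordField_z hmi hβ (Nat.zero_le _),
      branchDeriv_coordField_z hmi hβ (Nat.pos_of_neZero (m k)), hcast]
    simp only [Nat.succ_eq_add_one, Nat.add_sub_cancel, branchVar_val, zero_add, Nat.zero_sub,
      Nat.sub_self, hβ, Nat.cast_zero, zero_div, map_zero]
    ring
  · rw [coord_derivHom_of_ne hki, coordField, if_neg hki]
    ring

theorem exists_branchHom_coord_eq [Finite ι] {i : ι} (hmi : (m i : K) ≠ 0) {β : Var m → K[X]}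
    (hβ : β (branchVar i 0) = 0) : ∃ ψ : BranchHom K m i, ∀ x, coord i x ψ = β x := by
  have := Fintype.ofFinite ι
  have hreg := (Polynomial.isRegular_X_pow (R := K) (2 * m i)).left
  have hcoord := coord_derivHom_coordField hmi hβ
  obtain ⟨ψ, hψ⟩ := exists_eq_smul_of_forall_dvd hreg (derivHom i (coordField i β))
    (dvd_of_forall_dvd_coord fun x => ⟨_, hcoord x⟩)
  refine ⟨ψ, fun x => hreg ?_⟩
  simpa only [hψ, map_smul, smul_eq_mul] using hcoord x

end CoordField

section TangentOrder

variable [DecidableEq ι]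

/-- The order to which the coordinate `x` vanishes on the homomorphisms induced by vector fields
with components in `K[t]`. -/
def tangentOrder (i : ι) (x : Var m) : ℕ :=
  if x.1 = i then
    if (x.2 : ℕ) = 0 then 0 else if (x.2 : ℕ) + 1 = m x.1 then 2 * m x.1 - 1 else m x.1
  else m i

theorem tangentOrder_self {i : ι} (a : Fin (m i)) : tangentOrder i ⟨i, a⟩ =
    if (a : ℕ) = 0 then 0 else if (a : ℕ) + 1 = m i then 2 * m i - 1 else m i :=
  if_pos rfl

theorem tangentOrder_of_ne {i k : ι} (hki : k ≠ i) (a : Fin (m k)) :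
    tangentOrder i ⟨k, a⟩ = m i :=
  if_neg hki

variable [∀ i, NeZero (m i)]

theorem tangentOrder_branchVar {i : ι} {a : ℕ} (ha : a < m i) :
    tangentOrder i (branchVar i a : Var m) =
      if a = 0 then 0 else if a + 1 = m i then 2 * m i - 1 else m i := by
  simp [branchVar, tangentOrder_self, Nat.mod_eq_of_lt ha]

theorem pow_tangentOrder_dvd_coord_derivHom [Fintype ι] [CommRing K] (i : ι) (W : Var m → K[X])
    (x : Var m) :
    X ^ tangentOrder i x ∣ coord i x (derivHom i W) := by
  obtain ⟨k, a⟩ := x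
  rcases eq_or_ne k i with rfl | hki
  · rw [coord_derivHom_self, tangentOrder_self]
    split_ifs with hzero hlast
    · exact one_dvd _
    · rw [show 2 * m k - 1 = m k + a by omega, pow_add, hlast, branchDeriv_z_self]
      refine mul_dvd_mul_left _ (dvd_sub (dvd_sub ?_ ?_) ((dvd_mul_left _ _).mul_right _))
      · exact ((pow_dvd_pow _ a.isLt.le).mul_left _).mul_right _
      · exact (pow_dvd_pow _ a.isLt.le).mul_right _
    · exact dvd_mul_right _ _
  · rw [coord_derivHom_of_ne hki, tangentOrder_of_ne hki]
    exact dvd_mul_right _ _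

variable [Field K]

theorem pow_dvd_coordField {i : ι} {β : Var m → K[X]} (hβ₀ : β (branchVar i 0) = 0)
    (hβ : ∀ x, X ^ tangentOrder i x ∣ β x) (x : Var m) : X ^ (2 * m i) ∣ coordField i β x := by
  obtain ⟨k, a⟩ := x
  rcases eq_or_ne k i with rfl | hki
  · have hprev : X ^ m k ∣ β (branchVar k (a - 1)) := by
      rcases eq_or_ne ((a : ℕ) - 1) 0 with ha | ha
      · rw [ha, hβ₀]
        exact dvd_zero _
      · have horder := hβ (branchVar k (a - 1))
        rwa [tangentOrder_branchVar (by omega), if_neg ha, if_neg (by omega)] at horder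
    rw [coordField, if_pos rfl]
    refine dvd_sub ?_ ?_
    · rw [two_mul, pow_add]
      exact mul_dvd_mul_left _ hprev
    rcases Nat.eq_zero_or_pos a with ha | ha
    · simp [ha]
    · have hlast := hβ (branchVar k (m k - 1))
      rw [tangentOrder_branchVar (by omega), if_neg (by omega), if_pos (by omega)] at hlast
      refine (pow_dvd_pow X (by omega : 2 * m k ≤ a + (2 * m k - 1))).trans ?_
      rw [pow_add, mul_assoc]
      exact (mul_dvd_mul_left _ hlast).mul_left _
  · have hoff := hβ ⟨k, a⟩
    rw [tangentOrder_of_ne hki] at hoff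
    rw [coordField, if_neg hki, two_mul, pow_add]
    exact mul_dvd_mul_left _ hoff

theorem mem_range_derivHom_iff [Fintype ι] {i : ι} (hmi : (m i : K) ≠ 0) {ψ : BranchHom K m i} :
    ψ ∈ LinearMap.range (derivHom i) ↔ ∀ x, X ^ tangentOrder i x ∣ coord i x ψ := by
  constructor
  · rintro ⟨W, rfl⟩
    exact pow_tangentOrder_dvd_coord_derivHom i W
  · intro hψ
    have hψ₀ := coord_branchVar_zero i ψ
    choose W hW using pow_dvd_coordField (β := fun x => coord i x ψ) hψ₀ hψ
    refine ⟨W, branchHom_ext fun x => (Polynomial.isRegular_X_pow (2 * m i)).left ?_⟩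
    have hfield : coordField i (fun x => coord i x ψ) = (X ^ (2 * m i) : K[X]) • W := funext hW
    have hcoord := coord_derivHom_coordField (β := fun x => coord i x ψ) hmi hψ₀ x
    rwa [hfield, map_smul, map_smul] at hcoord

end TangentOrder

section GluedFamily

variable [∀ i, NeZero (m i)] [DecidableEq ι] [CommRing K] {ψ : ∀ i, BranchHom K m i}

theorem coeff_zero_map_minorRel (hψ : ∀ f, Glues m fun i => ψ i f) {k : ι} (hk : 3 ≤ m k)
    (a b : Fin (m k)) : (ψ k (minorRel k a b)).coeff 0 = 0 := by
  have : NeZero (m k) := ⟨by omega⟩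
  obtain ⟨c, hca, hcb⟩ := Fin.exists_ne_and_ne_of_two_lt a b hk
  have hcoeff := congrArg (Polynomial.coeff · (c : ℕ)) (pow_mul_map_minorRel (ψ k) a b c)
  simp only [Polynomial.coeff_sub] at hcoeff
  rw [(hψ (minorRel k c b)).coeff_pow_mul_eq_zero (Fin.val_ne_of_ne hca.symm) c.isLt,
    (hψ (minorRel k c a)).coeff_pow_mul_eq_zero (Fin.val_ne_of_ne hcb.symm) c.isLt] at hcoeff
  simpa [Polynomial.coeff_X_pow_mul'] using hcoeff

theorem coeff_zero_map_crossRel (hψ : ∀ f, Glues m fun i => ψ i f) {k l : ι} (hkl : k ≠ l)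
    (hl : 2 ≤ m l) (a b : ℕ) : (ψ l (crossRel hkl a b)).coeff 0 = 0 := by
  rcases eq_or_ne b 0 with rfl | hb
  · have hcoeff := (hψ (crossRel hkl a 1)).coeff_eq_zero one_pos hl
    rwa [map_crossRel_eq_pow_mul, Polynomial.coeff_X_pow_mul', if_pos le_rfl] at hcoeff
  · rw [map_crossRel_eq_pow_mul, Polynomial.coeff_X_pow_mul', if_neg (by omega)]

theorem exists_coeff_zero_map_minorRel [Fintype ι] (hm : 3 ≤ ∑ i, m i)
    (hψ : ∀ f, Glues m fun i => ψ i f) (k : ι) (a b : Fin (m k)) :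
    ∃ i, (ψ i (minorRel k a b)).coeff 0 = 0 := by
  by_cases hother : ∃ i, k ≠ i
  · obtain ⟨i, hki⟩ := hother
    exact ⟨i, by rw [map_minorRel_of_ne _ hki, Polynomial.coeff_zero]⟩
  · push Not at hother
    rw [Fintype.sum_eq_single k fun i hik => absurd (hother i).symm hik] at hm
    exact ⟨k, coeff_zero_map_minorRel hψ hm a b⟩

theorem exists_coeff_zero_map_crossRel [Fintype ι] (hm : 3 ≤ ∑ i, m i)
    (hψ : ∀ f, Glues m fun i => ψ i f) {k l : ι} (hkl : k ≠ l) (a b : ℕ) :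
    ∃ i, (ψ i (crossRel hkl a b)).coeff 0 = 0 := by
  by_cases hother : ∃ i, i ≠ k ∧ i ≠ l
  · obtain ⟨i, hik, hil⟩ := hother
    exact ⟨i, by rw [map_crossRel_of_ne _ hik.symm hil.symm, Polynomial.coeff_zero]⟩
  · rw [Fintype.sum_eq_add k l hkl fun i hi => absurd ⟨i, hi⟩ hother] at hm
    rcases (by omega : 2 ≤ m k ∨ 2 ≤ m l) with hk | hl
    · exact ⟨k, crossRel_comm (K := K) (m := m) hkl a b ▸
        coeff_zero_map_crossRel hψ hkl.symm hk b a⟩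
    · exact ⟨l, coeff_zero_map_crossRel hψ hkl hl a b⟩

theorem pow_dvd_of_glues [Fintype ι] (hm : 3 ≤ ∑ i, m i) (hψ : ∀ f, Glues m fun i => ψ i f)
    (i : ι) (f : curveIdeal K m) : X ^ m i ∣ ψ i f := by
  have htop : Submodule.comap (ψ i) (Ideal.span {X ^ m i}) =
      (⊤ : Submodule (MvPolynomial (Var m) K) _) := by
    refine eq_top_of_forall_rel_mem _ (fun k a b _ => Ideal.mem_span_singleton.2 ?_)
      fun k l hkl a b => Ideal.mem_span_singleton.2 ?_
    · obtain ⟨j, hj⟩ := exists_coeff_zero_map_minorRel hm hψ k a b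
      exact (hψ _).pow_dvd hj i
    · obtain ⟨j, hj⟩ := exists_coeff_zero_map_crossRel hm hψ hkl a b
      exact (hψ _).pow_dvd hj i
  exact Ideal.mem_span_singleton.1 (Submodule.eq_top_iff'.1 htop f)

end GluedFamily

section Component

variable [∀ i, NeZero (m i)] [CommRing K]

variable (K m) in
/-- The coordinate ring of the rational partition curve. -/
abbrev CurveRing := MvPolynomial (Var m) K ⧸ curveIdeal K m

variable (K m) in
/-- The first-order deformations of the curve as a subscheme of affine space. -/
abbrev Deformation := Module.Dual (CurveRing K m) (curveIdeal K m).Cotangent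

variable [DecidableEq ι]

/-- Restriction of functions on the curve to the branch `i`. -/
noncomputable def restrict (i : ι) : CurveRing K m →ₐ[K] K[X] :=
  Ideal.Quotient.liftₐ _ (branchEval K m i) fun _ => branchEval_eq_zero_of_mem i

theorem restrict_mk (i : ι) (p : MvPolynomial (Var m) K) :
    restrict i (Ideal.Quotient.mk (curveIdeal K m) p) = branchEval K m i p :=
  rfl

theorem restrict_ext [Finite ι] [Nonempty ι] {b b' : CurveRing K m}
    (hb : ∀ i, restrict i b = restrict i b') : b = b' := by
  obtain ⟨p, rfl⟩ := Ideal.Quotient.mk_surjective b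
  obtain ⟨p', rfl⟩ := Ideal.Quotient.mk_surjective b'
  refine Ideal.Quotient.eq.2 (mem_curveIdeal_iff.2 fun i => ?_)
  rw [map_sub, sub_eq_zero]
  exact hb i

theorem exists_restrict_eq_iff [Finite ι] {g : ι → K[X]} :
    (∃ b : CurveRing K m, ∀ i, restrict i b = g i) ↔ Glues m g :=
  Ideal.Quotient.mk_surjective.exists.trans exists_branchEval_eq_iff

/-- The restriction of a first-order deformation of the curve to the branch `i`. -/
noncomputable def component (i : ι) : Deformation K m →ₗ[K] BranchHom K m i where
  toFun φ :=
    { toFun f := restrict i (φ ((curveIdeal K m).toCotangent f))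
      map_add' f g := by simp only [map_add]
      map_smul' g f := by
        have hsmul : (curveIdeal K m).toCotangent (g • f) =
            Ideal.Quotient.mk (curveIdeal K m) g • (curveIdeal K m).toCotangent f :=
          map_smul _ g f
        rw [hsmul, map_smul, smul_eq_mul, map_mul]
        rfl }
  map_add' φ φ' := LinearMap.ext fun f => map_add (restrict i) _ _
  map_smul' c φ := LinearMap.ext fun f => map_smul (restrict i) c _

theorem component_apply (i : ι) (φ : Deformation K m) (f : curveIdeal K m) :
    component i φ f = restrict i (φ ((curveIdeal K m).toCotangent f)) :=
  rfl

theorem glues_component [Finite ι] (φ : Deformation K m) (f : curveIdeal K m) :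
    Glues m fun i => component i φ f :=
  exists_restrict_eq_iff.1 ⟨_, fun _ => rfl⟩

theorem exists_component_eq [Finite ι] [Nonempty ι] {ψ : ∀ i, BranchHom K m i}
    (hψ : ∀ f, Glues m fun i => ψ i f) : ∃ φ, ∀ i, component i φ = ψ i := by
  choose F hF using fun f => exists_restrict_eq_iff.2 (hψ f)
  let L : curveIdeal K m →ₗ[MvPolynomial (Var m) K] CurveRing K m :=
    { toFun := F
      map_add' f g := restrict_ext fun i => by simp only [map_add, hF]
      map_smul' g f := restrict_ext fun i => by
        change restrict i (F (g • f)) = restrict i (Ideal.Quotient.mk _ g * F f)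
        rw [map_mul, hF, hF, map_smul_branchHom, restrict_mk] }
  have hL (f g : curveIdeal K m) : L (f * g) = 0 := by
    change L ((f : MvPolynomial (Var m) K) • g) = 0
    rw [map_smul]
    change Ideal.Quotient.mk _ (f : MvPolynomial (Var m) K) * L g = 0
    rw [Ideal.Quotient.eq_zero_iff_mem.2 f.2, zero_mul]
  refine ⟨(Ideal.Cotangent.lift L hL).extendScalarsOfSurjective Ideal.Quotient.mk_surjective,
    fun i => LinearMap.ext fun f => ?_⟩
  exact (congrArg (restrict i) (Ideal.Cotangent.lift_toCotangent L hL f)).trans (hF f i)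

theorem restrict_sum_mul_pderiv [Fintype ι] (i : ι) (v : Var m → CurveRing K m)
    (f : curveIdeal K m) :
    restrict i (∑ x, v x * Ideal.Quotient.mk _ (MvPolynomial.pderiv x f.1)) =
      derivHom i (fun x => restrict i (v x)) f := by
  simp only [map_sum, map_mul, restrict_mk, derivHom_apply, branchDeriv_apply]

theorem glues_derivHom [Fintype ι] {W : ι → Var m → K[X]} (hW : ∀ x, Glues m fun i => W i x)
    (f : curveIdeal K m) : Glues m fun i => derivHom i (W i) f := by
  choose v hv using fun x => exists_restrict_eq_iff.2 (hW x)
  refine exists_restrict_eq_iff.1 ⟨_, fun i => (restrict_sum_mul_pderiv i v f).trans ?_⟩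
  simp only [hv]

theorem mem_range_dualMap_iff_exists_glues [Fintype ι] [Nonempty ι]
    {dbar : (curveIdeal K m).Cotangent →ₗ[CurveRing K m]
      CurveRing K m ⊗[MvPolynomial (Var m) K]
        KaehlerDifferential K (MvPolynomial (Var m) K)}
    (hdbar : ∀ f : curveIdeal K m, dbar ((curveIdeal K m).toCotangent f) =
      1 ⊗ₜ[MvPolynomial (Var m) K] KaehlerDifferential.D K (MvPolynomial (Var m) K) f.1)
    (φ : Deformation K m) :
    φ ∈ LinearMap.range dbar.dualMap ↔ ∃ W : ι → Var m → K[X],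
      (∀ x, Glues m fun i => W i x) ∧ ∀ i, component i φ = derivHom i (W i) := by
  rw [mem_range_dualMap_iff hdbar]
  constructor
  · rintro ⟨v, hv⟩
    refine ⟨fun i x => restrict i (v x), fun x => exists_restrict_eq_iff.1 ⟨v x, fun _ => rfl⟩,
      fun i => LinearMap.ext fun f => ?_⟩
    rw [component_apply, hv, restrict_sum_mul_pderiv]
  · rintro ⟨W, hW, hφ⟩
    choose v hv using fun x => exists_restrict_eq_iff.2 (hW x)
    refine ⟨v, fun f => restrict_ext fun i => ?_⟩
    rw [restrict_sum_mul_pderiv, ← component_apply, hφ]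
    simp only [hv]

end Component

section Jet

variable [∀ i, NeZero (m i)] [DecidableEq ι]

/-- The index set of the Taylor coefficients which detect nontrivial deformations. -/
abbrev JetIndex (m : ι → ℕ) := (p : ι × Var m) × Fin (tangentOrder p.1 p.2)

theorem sum_tangentOrder_self_add_one (i : ι) :
    ∑ a : Fin (m i), tangentOrder i ⟨i, a⟩ + 1 = m i * m i := by
  simp only [tangentOrder_self]
  rcases hm : m i with _ | _ | k
  · exact absurd hm (NeZero.ne _)
  · simp
  · have hmid (a : Fin k) : (if (a.castSucc.succ : ℕ) = 0 then 0
        else if (a.castSucc.succ : ℕ) + 1 = k + 1 + 1 then 2 * (k + 1 + 1) - 1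
          else k + 1 + 1) = k + 2 := by
      rw [Fin.val_succ, Fin.val_castSucc, if_neg (by omega), if_neg (by omega)]
    rw [Fin.sum_univ_succ, Fin.sum_univ_castSucc, Finset.sum_congr rfl fun a _ => hmid a]
    simp only [Fin.val_zero, Fin.succ_last, Fin.val_last, Finset.sum_const, Finset.card_univ,
      Fintype.card_fin, smul_eq_mul, if_true, Nat.succ_ne_zero, if_false]
    rw [show 2 * (k + 1 + 1) - 1 = 2 * k + 3 by omega]
    ring

theorem sum_tangentOrder_add_one [Fintype ι] (i : ι) :
    ∑ x : Var m, tangentOrder i x + 1 = m i * ∑ k, m k := by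
  have hoff (k : ι) (hk : k ∈ Finset.univ.erase i) :
      ∑ a : Fin (m k), tangentOrder i ⟨k, a⟩ = m i * m k := by
    simp only [tangentOrder_of_ne (Finset.ne_of_mem_erase hk), Finset.sum_const, Finset.card_univ,
      Fintype.card_fin, smul_eq_mul, mul_comm]
  rw [Fintype.sum_sigma, ← Finset.add_sum_erase _ _ (Finset.mem_univ i),
    Finset.sum_congr rfl hoff, add_right_comm, sum_tangentOrder_self_add_one, ← Finset.mul_sum,
    ← mul_add, Finset.add_sum_erase _ _ (Finset.mem_univ i)]

theorem card_jetIndex_add_card [Fintype ι] :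
    Fintype.card (JetIndex m) + Fintype.card ι = (∑ i, m i) * ∑ i, m i := by
  rw [Finset.sum_mul, ← Finset.sum_congr rfl fun i _ => sum_tangentOrder_add_one i,
    Finset.sum_add_distrib, Fintype.card_sigma, Fintype.sum_prod_type]
  simp

section Field

variable [Field K]

/-- The Taylor coefficients of the coordinates of a family of homomorphisms, from the degree
`m i` on. -/
noncomputable def jet : (∀ i, BranchHom K m i) →ₗ[K] JetIndex m → K :=
  LinearMap.pi fun j => Polynomial.lcoeff K (m j.1.1 + j.2) ∘ₗ
    (coord j.1.1 j.1.2).restrictScalars K ∘ₗ LinearMap.proj j.1.1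

theorem jet_apply (ψ : ∀ i, BranchHom K m i) (j : JetIndex m) :
    jet ψ j = (coord j.1.1 j.1.2 (ψ j.1.1)).coeff (m j.1.1 + j.2) :=
  rfl

theorem jet_pow_smul (ψ : ∀ i, BranchHom K m i) (j : JetIndex m) :
    jet (fun i => (X ^ m i : K[X]) • ψ i) j = (coord j.1.1 j.1.2 (ψ j.1.1)).coeff j.2 := by
  rw [jet_apply, map_smul, smul_eq_mul, Polynomial.coeff_X_pow_mul', if_pos le_self_add,
    Nat.add_sub_cancel_left]

theorem jet_pow_smul_eq_zero_iff [Fintype ι] (hmK : ∀ i, (m i : K) ≠ 0)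
    {ψ : ∀ i, BranchHom K m i} : jet (fun i => (X ^ m i : K[X]) • ψ i) = 0 ↔
      ∀ i, ψ i ∈ LinearMap.range (derivHom i) := by
  simp only [funext_iff, jet_pow_smul, mem_range_derivHom_iff (hmK _), Polynomial.X_pow_dvd_iff]
  exact ⟨fun h i x d hd => h ⟨(i, x), d, hd⟩, fun h j => h j.1.1 j.1.2 j.2 j.2.isLt⟩

theorem exists_jet_pow_smul_eq [Finite ι] (hmK : ∀ i, (m i : K) ≠ 0) (v : JetIndex m → K) :
    ∃ ψ : ∀ i, BranchHom K m i, jet (fun i => (X ^ m i : K[X]) • ψ i) = v := by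
  classical
  let β (i : ι) (x : Var m) : K[X] :=
    Polynomial.ofFn (tangentOrder i x) fun j => v ⟨(i, x), j⟩
  have hβ (i : ι) : β i (branchVar i 0) = 0 := Polynomial.ext fun d => by
    refine Polynomial.ofFn_coeff_eq_zero_of_ge _ ?_
    rw [tangentOrder_branchVar (Nat.pos_of_neZero (m i)), if_pos rfl]
    exact Nat.zero_le d
  choose ψ hψ using fun i => exists_branchHom_coord_eq (hmK i) (hβ i)
  refine ⟨ψ, funext fun j => ?_⟩
  rw [jet_pow_smul, hψ]
  exact Polynomial.ofFn_coeff_eq_val_of_lt _ j.2.isLt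

variable [Fintype ι]

/-- The jets of the deformations induced by the translations of affine space. -/
noncomputable def translationJet : (Var m → K) →ₗ[K] JetIndex m → K :=
  jet ∘ₗ LinearMap.pi fun i =>
    (derivHom i).restrictScalars K ∘ₗ (Algebra.linearMap K K[X]).compLeft (Var m)

theorem translationJet_apply (c : Var m → K) :
    translationJet c = jet fun i => derivHom i fun x => C (c x) :=
  rfl

theorem coeff_eq_zero_of_translationJet_eq_zero {c : Var m → K} (hc : translationJet c = 0)
    {k : ι} {a d : ℕ} (ha : 0 < a) (ham : a < m k) (hd : d < m k) :
    (branchDeriv k (fun x => C (c x)) (z k (a + 1)) - X ^ (a + 1) * C (c (branchVar k 0)) -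
      ((a + 1 : ℕ) : K[X]) * X ^ a *
        (C (c (branchVar k 1)) - X * C (c (branchVar k 0)))).coeff d = 0 := by
  have horder : d < tangentOrder k (⟨k, a, ham⟩ : Var m) := by
    rw [tangentOrder_self, if_neg ha.ne']
    split_ifs <;> omega
  have hjet := congrFun hc ⟨(k, ⟨k, a, ham⟩), d, horder⟩
  rw [translationJet_apply, jet_apply, coord_derivHom_self, Polynomial.coeff_X_pow_mul',
    if_pos le_self_add, Nat.add_sub_cancel_left, z_of_lt (by omega : 1 < m k),
    z_of_lt (by omega : 0 < m k), branchDeriv_X, branchDeriv_X] at hjet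
  exact hjet

theorem eq_zero_of_translationJet_eq_zero {c : Var m → K} (hc : translationJet c = 0) {k : ι}
    (hk : 3 ≤ m k) (hmk : (m k : K) ≠ 0) (a : Fin (m k)) : c ⟨k, a⟩ = 0 := by
  have hzero : c (branchVar k 0) = 0 := by
    have hcoeff := coeff_eq_zero_of_translationJet_eq_zero hc one_pos
      (by omega : 1 < m k) (by omega : 2 < m k)
    have hexpand (p q r : K) : C p - X ^ (1 + 1) * C q -
        ((1 + 1 : ℕ) : K[X]) * X ^ 1 * (C r - X * C q) = C p - C (2 * r) * X + C q * X ^ 2 := by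
      rw [C.map_mul, map_ofNat]
      push_cast
      ring
    rw [z_of_lt (by omega), branchDeriv_X, hexpand] at hcoeff
    simpa [Polynomial.coeff_C, Polynomial.coeff_X] using hcoeff
  have hsucc (b : ℕ) (hb : 0 < b) (hbm : b + 1 < m k) : c (branchVar k (b + 1)) = 0 := by
    have hcoeff := coeff_eq_zero_of_translationJet_eq_zero hc hb (by omega) (by omega : 0 < m k)
    rw [z_of_lt hbm, branchDeriv_X] at hcoeff
    simpa [Polynomial.mul_coeff_zero, hb.ne] using hcoeff
  have hone : c (branchVar k 1) = 0 := by
    have hcoeff := coeff_eq_zero_of_translationJet_eq_zero hc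
      (by omega : 0 < m k - 1) (by omega) (by omega : m k - 1 < m k)
    rw [Nat.sub_add_cancel (by omega), branchDeriv_z_self, hzero] at hcoeff
    rw [← map_natCast C] at hcoeff
    simpa only [map_zero, mul_zero, sub_zero, zero_sub, Polynomial.coeff_neg, mul_assoc,
      Polynomial.coeff_C_mul, Polynomial.coeff_X_pow_mul', le_refl, if_true, Nat.sub_self,
      Polynomial.coeff_C_zero, neg_eq_zero, mul_eq_zero, hmk, false_or] using hcoeff
  rw [← branchVar_val]
  obtain ⟨_ | _ | a, ha⟩ := a
  · exact hzero
  · exact hone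
  · exact hsucc (a + 1) a.succ_pos ha

theorem translationJet_injective (hmK : ∀ i, (m i : K) ≠ 0) (hm : 3 ≤ ∑ i, m i) :
    Function.Injective (translationJet : (Var m → K) →ₗ[K] JetIndex m → K) := by
  refine (injective_iff_map_eq_zero _).2 fun c hc => funext fun x => ?_
  obtain ⟨k, a⟩ := x
  by_cases hother : ∃ i, k ≠ i
  · obtain ⟨i, hki⟩ := hother
    have hjet := congrFun hc ⟨(i, ⟨k, a⟩), 0, by
      rw [tangentOrder_of_ne hki]
      exact Nat.pos_of_neZero _⟩
    rw [translationJet_apply, jet_apply, coord_derivHom_of_ne hki] at hjet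
    simpa [Polynomial.coeff_X_pow_mul'] using hjet
  push Not at hother
  rw [Fintype.sum_eq_single k fun i hik => absurd (hother i).symm hik] at hm
  exact eq_zero_of_translationJet_eq_zero hc hm (hmK k) a

end Field

end Jet

section Dimension

variable [∀ i, NeZero (m i)] [DecidableEq ι] [Field K]

/-- The Taylor coefficients of the coordinates of a first-order deformation. -/
noncomputable def deformationJet : Deformation K m →ₗ[K] JetIndex m → K :=
  jet ∘ₗ LinearMap.pi component

theorem deformationJet_surjective [Finite ι] [Nonempty ι] (hmK : ∀ i, (m i : K) ≠ 0) :
    Function.Surjective (deformationJet : Deformation K m →ₗ[K] JetIndex m → K) := by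
  intro v
  obtain ⟨ψ, hψ⟩ := exists_jet_pow_smul_eq hmK v
  obtain ⟨φ, hφ⟩ := exists_component_eq (ψ := fun i => (X ^ m i : K[X]) • ψ i) fun f =>
    glues_of_forall_dvd fun i => dvd_mul_right _ (ψ i f)
  exact ⟨φ, (congrArg jet (funext hφ)).trans hψ⟩

variable [Fintype ι] [Nonempty ι]
  {dbar : (curveIdeal K m).Cotangent →ₗ[CurveRing K m]
    CurveRing K m ⊗[MvPolynomial (Var m) K] KaehlerDifferential K (MvPolynomial (Var m) K)}
  (hdbar : ∀ f : curveIdeal K m, dbar ((curveIdeal K m).toCotangent f) =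
    1 ⊗ₜ[MvPolynomial (Var m) K] KaehlerDifferential.D K (MvPolynomial (Var m) K) f.1)
include hdbar

theorem ker_deformationJet_le_range (hmK : ∀ i, (m i : K) ≠ 0) (hm : 3 ≤ ∑ i, m i) :
    LinearMap.ker (deformationJet : Deformation K m →ₗ[K] JetIndex m → K) ≤
      (LinearMap.range dbar.dualMap).restrictScalars K := by
  intro φ hφ
  have hdvd := pow_dvd_of_glues hm (glues_component φ)
  choose ψ hψ using fun i => exists_eq_smul_of_forall_dvd
    (Polynomial.isRegular_X_pow (R := K) (m i)).left (component i φ) (hdvd i)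
  have hjet : jet (fun i => (X ^ m i : K[X]) • ψ i) = 0 :=
    (congrArg jet (funext hψ)).symm.trans hφ
  choose W hW using (jet_pow_smul_eq_zero_iff hmK).1 hjet
  refine (mem_range_dualMap_iff_exists_glues hdbar φ).2
    ⟨fun i => (X ^ m i : K[X]) • W i, fun x => ?_, fun i => ?_⟩
  · exact glues_of_forall_dvd fun i => dvd_mul_right _ (W i x)
  · rw [map_smul, hW, hψ]

theorem map_deformationJet_range (hmK : ∀ i, (m i : K) ≠ 0) :
    ((LinearMap.range dbar.dualMap).restrictScalars K).map deformationJet =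
      LinearMap.range (translationJet : (Var m → K) →ₗ[K] JetIndex m → K) := by
  refine le_antisymm ?_ ?_
  · rintro _ ⟨φ, hφ, rfl⟩
    obtain ⟨W, hW, hφW⟩ := (mem_range_dualMap_iff_exists_glues hdbar φ).1 hφ
    choose c h hh using hW
    have hsplit (i : ι) : component i φ =
        derivHom i (fun x => C (c x)) + (X ^ m i : K[X]) • derivHom i fun x => h x i := by
      rw [hφW, ← map_smul, ← map_add]
      exact congrArg _ (funext fun x => sub_eq_iff_eq_add'.1 (hh x i))
    refine ⟨c, ?_⟩
    have hzero : jet (fun i => (X ^ m i : K[X]) • derivHom i fun x => h x i) = 0 :=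
      (jet_pow_smul_eq_zero_iff hmK).2 fun i => ⟨_, rfl⟩
    calc translationJet c
        = jet (fun i => derivHom i fun x => C (c x)) +
          jet (fun i => (X ^ m i : K[X]) • derivHom i fun x => h x i) := by
          rw [hzero, add_zero, translationJet_apply]
      _ = deformationJet φ := (map_add jet _ _).symm.trans (congrArg jet (funext hsplit).symm)
  · rintro _ ⟨c, rfl⟩
    have hc (x : Var m) : Glues m fun _ => C (c x) := ⟨c x, by simp⟩
    obtain ⟨φ, hφ⟩ := exists_component_eq (glues_derivHom hc)
    exact ⟨φ, (mem_range_dualMap_iff_exists_glues hdbar φ).2 ⟨_, hc, hφ⟩,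
      congrArg jet (funext hφ)⟩

omit [Nonempty ι] [DecidableEq ι] in
theorem finrank_quotient_range_dualMap (hmK : ∀ i, (m i : K) ≠ 0) (hm : 3 ≤ ∑ i, m i) :
    Module.finrank K (Deformation K m ⧸ LinearMap.range dbar.dualMap) =
      (∑ i, m i) * (∑ i, m i - 1) - Fintype.card ι := by
  classical
  have : Nonempty ι := by
    by_contra hempty
    simp [not_nonempty_iff.1 hempty] at hm
  rw [← (Submodule.Quotient.restrictScalarsEquiv K (LinearMap.range dbar.dualMap)).finrank_eq,
    finrank_quotient_eq_sub_of_map_eq_range (deformationJet_surjective hmK)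
      (ker_deformationJet_le_range hdbar hmK hm) (map_deformationJet_range hdbar hmK)
      (translationJet_injective hmK hm), Module.finrank_pi, Module.finrank_pi,
    Nat.eq_sub_of_add_eq card_jetIndex_add_card]
  simp only [Fintype.card_sigma, Fintype.card_fin, Nat.mul_sub, mul_one, Nat.sub_right_comm]

end Dimension

end RationalPartitionCurve

open RationalPartitionCurve in
theorem stmt_11_general {ι K : Type*} [Fintype ι] [Field K] (m : ι → ℕ) (hm : ∀ i, 1 ≤ m i)
    (hmK : ∀ i, (m i : K) ≠ 0) (n : ℕ) (hn : n = ∑ i, m i) (hn3 : 3 ≤ n)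
    (σ : ∀ i : ι, Fin (m i) → MvPolynomial ((i : ι) × Fin (m i)) K)
    (hσ : ∀ (i : ι) (a : Fin (m i)), σ i a =
      if h : (a : ℕ) + 1 < m i then MvPolynomial.X ⟨i, ⟨(a : ℕ) + 1, h⟩⟩
      else (MvPolynomial.X ⟨i, ⟨0, hm i⟩⟩) ^ 2)
    (I : Ideal (MvPolynomial ((i : ι) × Fin (m i)) K))
    (hI : I = Ideal.span
      ({p : MvPolynomial ((i : ι) × Fin (m i)) K |
          ∃ (i : ι) (a b : Fin (m i)), a < b ∧
            p = MvPolynomial.X ⟨i, a⟩ * σ i b - MvPolynomial.X ⟨i, b⟩ * σ i a}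
        ∪ {p : MvPolynomial ((i : ι) × Fin (m i)) K |
          ∃ (k l : ι) (a : Fin (m k)) (b : Fin (m l)), k ≠ l ∧
            p = MvPolynomial.X ⟨k, a⟩ * MvPolynomial.X ⟨l, b⟩}))
    (dbar : I.Cotangent →ₗ[MvPolynomial ((i : ι) × Fin (m i)) K ⧸ I]
      (MvPolynomial ((i : ι) × Fin (m i)) K ⧸ I) ⊗[MvPolynomial ((i : ι) × Fin (m i)) K]
        (KaehlerDifferential K (MvPolynomial ((i : ι) × Fin (m i)) K)))
    (hdbar : ∀ x : I, dbar (I.toCotangent x)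
      = 1 ⊗ₜ[MvPolynomial ((i : ι) × Fin (m i)) K]
          (KaehlerDifferential.D K (MvPolynomial ((i : ι) × Fin (m i)) K) x.1)) :
    Module.finrank K
      ((Module.Dual (MvPolynomial ((i : ι) × Fin (m i)) K ⧸ I) I.Cotangent) ⧸
        LinearMap.range dbar.dualMap)
      = n * (n - 1) - Fintype.card ι := by
  classical
  have (i : ι) : NeZero (m i) := ⟨Nat.one_le_iff_ne_zero.1 (hm i)⟩
  have hz (i : ι) (a : Fin (m i)) : σ i a = z i (a + 1) := by
    rw [hσ]
    split_ifs with ha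
    · exact (z_val i ⟨a + 1, ha⟩).symm
    · rw [show (a : ℕ) + 1 = m i by omega, z_self]
      rfl
  have hcurve : I = curveIdeal K m := by
    simp only [hI, curveIdeal, minor, z_val, hz]
  subst hcurve hn
  exact finrank_quotient_range_dualMap hdbar hmK hn3

/-- Let `n = m_1 + ⋯ + m_r ≥ 3` (`r ≥ 1`, `m_i ≥ 1`), let `P` be the polynomial ring over ℂ
in the `n` variables `z^{(i)}_a`, and let `I` be the ideal generated by the 2×2 minors
`z^{(i)}_a σ_i(b) − z^{(i)}_b σ_i(a)` (`a < b`) within each branch — where `σ_i(a) = z^{(i)}_{a+1}`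
for `a < m_i` and `σ_i(m_i) = (z^{(i)}_1)²` — together with the cross products
`z^{(k)}_a z^{(l)}_b` (`k ≠ l`). Set `B = P/I` (the rational partition curve). With
`d̄ : I/I² → B ⊗_P Ω_{P/ℂ}` induced by the universal derivation, the cokernel `T¹` of
`Hom_B(B ⊗_P Ω_{P/ℂ}, B) → Hom_B(I/I², B)` (precomposition with `d̄`) has
`dim_ℂ T¹ = n(n−1) − r`. -/
theorem stmt_11 (r : ℕ) (hr : 1 ≤ r) (m : Fin r → ℕ) (hm : ∀ i, 1 ≤ m i)
    (n : ℕ) (hn : n = ∑ i, m i) (hn3 : 3 ≤ n)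
    (σ : ∀ i : Fin r, Fin (m i) → MvPolynomial ((i : Fin r) × Fin (m i)) ℂ)
    (hσ : ∀ (i : Fin r) (a : Fin (m i)), σ i a =
      if h : (a : ℕ) + 1 < m i then MvPolynomial.X ⟨i, ⟨(a : ℕ) + 1, h⟩⟩
      else (MvPolynomial.X ⟨i, ⟨0, hm i⟩⟩) ^ 2)
    (I : Ideal (MvPolynomial ((i : Fin r) × Fin (m i)) ℂ))
    (hI : I = Ideal.span
      ({p : MvPolynomial ((i : Fin r) × Fin (m i)) ℂ |
          ∃ (i : Fin r) (a b : Fin (m i)), a < b ∧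
            p = MvPolynomial.X ⟨i, a⟩ * σ i b - MvPolynomial.X ⟨i, b⟩ * σ i a}
        ∪ {p : MvPolynomial ((i : Fin r) × Fin (m i)) ℂ |
          ∃ (k l : Fin r) (a : Fin (m k)) (b : Fin (m l)), k ≠ l ∧
            p = MvPolynomial.X ⟨k, a⟩ * MvPolynomial.X ⟨l, b⟩}))
    (dbar : I.Cotangent →ₗ[MvPolynomial ((i : Fin r) × Fin (m i)) ℂ ⧸ I]
      (MvPolynomial ((i : Fin r) × Fin (m i)) ℂ ⧸ I) ⊗[MvPolynomial ((i : Fin r) × Fin (m i)) ℂ]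
        (KaehlerDifferential ℂ (MvPolynomial ((i : Fin r) × Fin (m i)) ℂ)))
    (hdbar : ∀ x : I, dbar (I.toCotangent x)
      = 1 ⊗ₜ[MvPolynomial ((i : Fin r) × Fin (m i)) ℂ]
          (KaehlerDifferential.D ℂ (MvPolynomial ((i : Fin r) × Fin (m i)) ℂ) x.1)) :
    Module.finrank ℂ
      ((Module.Dual (MvPolynomial ((i : Fin r) × Fin (m i)) ℂ ⧸ I) I.Cotangent) ⧸
        LinearMap.range dbar.dualMap)
      = n * (n - 1) - r := by
  simpa using stmt_11_general m hm (fun i => Nat.cast_ne_zero.2 (Nat.one_le_iff_ne_zero.1 (hm i)))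
    n hn hn3 σ hσ I hI dbar hdbar
end
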